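/- arXiv:2107.14268 — 2 statements merged into one kernel-verified Lean document; each statement's English description precedes it below -/
import Mathlib

section
/- If X is a Markov chain in ℕ with cemetery 0 on a probability space (Ω,𝔉,ℙ), then ι(X) = (P_N(X))_{N∈ℕ} is a virtual Markov chain. Conversely, if X = (X_N)_{N∈ℕ} is a virtual Markov chain on (Ω,𝔉,ℙ) satisfying ℙ(X ∈ ι(𝒞)) = 1, then there exists a Markov chain X in ℕ with cemetery 0 on (Ω,𝔉,ℙ) such that X = ι(X) almost surely. -/
open MeasureTheory

/-- The path space 𝒞: sequences on ℕ₀ = {0,1,2,...} for which the cemetery state 0 is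
absorbing. -/
def PathSpace : Set (ℕ → ℕ) := {x | ∀ i j : ℕ, i ≤ j → x i = 0 → x j = 0}

/-- The path space 𝒞_N: paths taking values in {0,...,N}. -/
def PathSpaceN (N : ℕ) : Set (ℕ → ℕ) := {x | x ∈ PathSpace ∧ ∀ i, x i ≤ N}

/-- The successive indices I_{x,N}(j) (valued in ℕ∞) at which the path `x` visits the set
{0,...,N}; here `inf ∅ = ⊤ = ∞`. -/
noncomputable def hitIdx (x : ℕ → ℕ) (N : ℕ) : ℕ → ℕ∞
  | 0 => sInf {e : ℕ∞ | ∃ i : ℕ, e = (i : ℕ∞) ∧ x i ≤ N}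
  | j + 1 => sInf {e : ℕ∞ | ∃ i : ℕ, e = (i : ℕ∞) ∧ hitIdx x N j < (i : ℕ∞) ∧ x i ≤ N}

/-- The projection P_N : 𝒞 → 𝒞_N. -/
noncomputable def proj (N : ℕ) (x : ℕ → ℕ) (j : ℕ) : ℕ :=
  if hitIdx x N j = ⊤ then 0 else x (hitIdx x N j).toNat

/-- The virtual path space 𝓒, indexed by ℕ = {1,2,...} (as `ℕ+`). -/
def VirtualPathSpace : Set (ℕ+ → ℕ → ℕ) :=
  {x | (∀ N : ℕ+, x N ∈ PathSpaceN N) ∧ ∀ N : ℕ+, proj N (x (N + 1)) = x N}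

/-- `X` is a Markov chain (on ℕ₀) under `P` with initial distribution `ν` and transition
matrix `K`: all its finite-dimensional distributions are given by the product formula. -/
def IsMarkovChain {Ω : Type*} [MeasurableSpace Ω] (P : Measure Ω)
    (X : ℕ → Ω → ℕ) (ν : ℕ → ℝ) (K : ℕ → ℕ → ℝ) : Prop :=
  (∀ i, Measurable (X i)) ∧
  ∀ (l : ℕ) (a : ℕ → ℕ),
    P {ω | ∀ i ≤ l, X i ω = a i}
      = ENNReal.ofReal (ν (a 0) * ∏ k ∈ Finset.Icc 1 l, K (a (k - 1)) (a k))

/-- `K` is a row-stochastic matrix on ℕ₀ with entries in [0,1]. -/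
def IsStochastic (K : ℕ → ℕ → ℝ) : Prop :=
  (∀ a b, 0 ≤ K a b) ∧ ∀ a, HasSum (K a) 1

/-- Membership in 𝒦: row-stochastic with `K 0 0 = 1`. -/
def MemK (K : ℕ → ℕ → ℝ) : Prop := IsStochastic K ∧ K 0 0 = 1

/-- Membership in 𝒦_N: row-stochastic with `K a a = 1` for all `a ∉ {1,...,N}`. -/
def MemKN (N : ℕ) (K : ℕ → ℕ → ℝ) : Prop :=
  IsStochastic K ∧ ∀ a : ℕ, ¬(1 ≤ a ∧ a ≤ N) → K a a = 1

/-- `ν` is a probability vector on ℕ₀. -/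
def IsProbVec (ν : ℕ → ℝ) : Prop := (∀ a, 0 ≤ ν a) ∧ HasSum ν 1

/-- `X` is a virtual Markov chain under `P`: it is (a.s.) 𝓒-valued and each coordinate
process is a Markov chain in {1,...,N} with cemetery 0. -/
def IsVMC {Ω : Type*} [MeasurableSpace Ω] (P : Measure Ω) (X : Ω → ℕ+ → ℕ → ℕ) : Prop :=
  (∀ᵐ ω ∂P, X ω ∈ VirtualPathSpace) ∧
  ∀ N : ℕ+, ∃ (ν : ℕ → ℝ) (K : ℕ → ℕ → ℝ),
    IsProbVec ν ∧ (∀ a : ℕ, (N : ℕ) < a → ν a = 0) ∧ MemKN N K ∧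
    IsMarkovChain P (fun i ω => X ω N i) ν K


theorem hit0 (x : ℕ → ℕ) (N t : ℕ) :
    hitIdx x N 0 = (t : ℕ∞) ↔ x t ≤ N ∧ ∀ i < t, N < x i := by
  rw [hitIdx]
  constructor
  · intro h
    have hne : {e : ℕ∞ | ∃ i : ℕ, e = (i : ℕ∞) ∧ x i ≤ N}.Nonempty := by
      by_contra hc
      rw [Set.not_nonempty_iff_eq_empty] at hc
      rw [hc, sInf_empty] at h
      exact absurd h (by simp)
    have hm := csInf_mem hne
    rw [h] at hm
    obtain ⟨i, hi, hx⟩ := hm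
    have : t = i := by exact_mod_cast hi
    subst this
    refine ⟨hx, fun i hi => ?_⟩
    by_contra hc
    have : sInf {e : ℕ∞ | ∃ i : ℕ, e = (i : ℕ∞) ∧ x i ≤ N} ≤ (i : ℕ∞) :=
      sInf_le ⟨i, rfl, not_lt.1 hc⟩
    rw [h] at this
    have : t ≤ i := by exact_mod_cast this
    omega
  · rintro ⟨h1, h2⟩
    apply le_antisymm
    · exact sInf_le ⟨t, rfl, h1⟩
    · apply le_sInf
      rintro e ⟨i, rfl, hi⟩
      by_contra hc
      have : i < t := by
        rw [not_le] at hc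
        exact_mod_cast hc
      have := h2 i this
      omega

theorem hitS (x : ℕ → ℕ) (N j t : ℕ) :
    hitIdx x N (j + 1) = (t : ℕ∞) ↔
      ∃ s < t, hitIdx x N j = (s : ℕ∞) ∧ x t ≤ N ∧ ∀ i, s < i → i < t → N < x i := by
  rw [hitIdx]
  constructor
  · intro h
    have hne : {e : ℕ∞ | ∃ i : ℕ, e = (i : ℕ∞) ∧ hitIdx x N j < (i : ℕ∞) ∧ x i ≤ N}.Nonempty := by
      by_contra hc
      rw [Set.not_nonempty_iff_eq_empty] at hc
      rw [hc, sInf_empty] at h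
      exact absurd h (by simp)
    have hm := csInf_mem hne
    rw [h] at hm
    obtain ⟨i, hi, hx1, hx⟩ := hm
    have : t = i := by exact_mod_cast hi
    subst this
    obtain ⟨s, hs⟩ := ENat.ne_top_iff_exists.1 hx1.ne_top
    rw [← hs] at hx1
    refine ⟨s, by exact_mod_cast hx1, hs.symm, hx, fun i hi hi2 => ?_⟩
    by_contra hc
    have : sInf {e : ℕ∞ | ∃ i : ℕ, e = (i : ℕ∞) ∧ hitIdx x N j < (i : ℕ∞) ∧ x i ≤ N} ≤ (i : ℕ∞) :=
      sInf_le ⟨i, rfl, by rw [← hs]; exact_mod_cast hi, not_lt.1 hc⟩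
    rw [h] at this
    have : t ≤ i := by exact_mod_cast this
    omega
  · rintro ⟨s, hst, hs, h1, h2⟩
    apply le_antisymm
    · exact sInf_le ⟨t, rfl, by rw [hs]; exact_mod_cast hst, h1⟩
    · apply le_sInf
      rintro e ⟨i, rfl, hi0, hi⟩
      by_contra hc
      have h3 : i < t := by
        rw [not_le] at hc
        exact_mod_cast hc
      rw [hs] at hi0
      have := h2 i (by exact_mod_cast hi0) h3
      omega

theorem hit_le {x : ℕ → ℕ} {N j t : ℕ} (h : hitIdx x N j = (t : ℕ∞)) : x t ≤ N := by
  cases j with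
  | zero => exact ((hit0 _ _ _).1 h).1
  | succ j => obtain ⟨s, _, _, h, _⟩ := (hitS _ _ _ _).1 h; exact h

theorem hit_inj {x : ℕ → ℕ} {N j s t : ℕ} (h : hitIdx x N j = (t : ℕ∞))
    (h' : hitIdx x N j = (s : ℕ∞)) : s = t := by
  rw [h] at h'; exact_mod_cast h'.symm

theorem hit_down {x : ℕ → ℕ} {N j t : ℕ} (h : hitIdx x N j = (t : ℕ∞)) (i : ℕ) (hi : i < j) :
    ∃ s < t, hitIdx x N i = (s : ℕ∞) := by
  induction j generalizing t with
  | zero => omega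
  | succ j ih =>
    obtain ⟨s, hst, hs, -⟩ := (hitS _ _ _ _).1 h
    rcases Nat.lt_succ_iff_lt_or_eq.1 hi with h1 | rfl
    · obtain ⟨u, hu, hu2⟩ := ih hs h1
      exact ⟨u, by omega, hu2⟩
    · exact ⟨s, hst, hs⟩

theorem hit_lt {x : ℕ → ℕ} {N i j s t : ℕ} (hi : hitIdx x N i = (s : ℕ∞))
    (hj : hitIdx x N j = (t : ℕ∞)) : i < j ↔ s < t := by
  rcases lt_trichotomy i j with h | rfl | h
  · obtain ⟨u, hu, hu2⟩ := hit_down hj i h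
    have := hit_inj hi hu2
    simp [h]; omega
  · have := hit_inj hi hj; simp; omega
  · obtain ⟨u, hu, hu2⟩ := hit_down hi j h
    have := hit_inj hj hu2
    omega

theorem hit_surj {x : ℕ → ℕ} {N : ℕ} (t : ℕ) (h : x t ≤ N) : ∃ j, hitIdx x N j = (t : ℕ∞) := by
  induction t using Nat.strong_induction_on with
  | _ t ih =>
    by_cases hc : ∃ s < t, x s ≤ N
    · let s := Nat.findGreatest (fun s => s < t ∧ x s ≤ N) t
      obtain ⟨s0, hs0, hs0'⟩ := hc
      have hs : s < t ∧ x s ≤ N :=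
        Nat.findGreatest_spec (P := fun s => s < t ∧ x s ≤ N) hs0.le ⟨hs0, hs0'⟩
      obtain ⟨j, hj⟩ := ih s hs.1 hs.2
      refine ⟨j + 1, (hitS _ _ _ _).2 ⟨s, hs.1, hj, h, fun i hi hit => ?_⟩⟩
      by_contra hcc
      exact Nat.findGreatest_is_greatest (P := fun s => s < t ∧ x s ≤ N) hi hit.le
        ⟨hit, not_lt.1 hcc⟩
    · push Not at hc
      exact ⟨0, (hit0 _ _ _).2 ⟨h, hc⟩⟩

theorem hit_dep {x y : ℕ → ℕ} {N j t : ℕ} (hxy : ∀ i ≤ t, x i = y i)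
    (h : hitIdx x N j = (t : ℕ∞)) : hitIdx y N j = (t : ℕ∞) := by
  induction j generalizing t with
  | zero =>
    rw [hit0] at h ⊢
    refine ⟨hxy t le_rfl ▸ h.1, fun i hi => hxy i hi.le ▸ h.2 i hi⟩
  | succ j ih =>
    rw [hitS] at h ⊢
    obtain ⟨s, hst, hs, h1, h2⟩ := h
    exact ⟨s, hst, ih (fun i hi => hxy i (by omega)) hs, hxy t le_rfl ▸ h1,
      fun i hi hi2 => hxy i hi2.le ▸ h2 i hi hi2⟩

theorem proj_of_hit {x : ℕ → ℕ} {N j t : ℕ} (h : hitIdx x N j = (t : ℕ∞)) :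
    proj N x j = x t := by
  simp [proj, h]

theorem proj_eq_iff {x : ℕ → ℕ} {N j k : ℕ} (hk : k ≠ 0) :
    proj N x j = k ↔ ∃ t : ℕ, hitIdx x N j = (t : ℕ∞) ∧ x t = k := by
  constructor
  · intro h
    by_cases hc : hitIdx x N j = ⊤
    · simp [proj, hc] at h; omega
    · obtain ⟨s, hs⟩ := ENat.ne_top_iff_exists.1 hc
      exact ⟨s, hs.symm, by rw [← proj_of_hit hs.symm, h]⟩
  · rintro ⟨t, ht, rfl⟩
    exact proj_of_hit ht

theorem proj_le (x : ℕ → ℕ) (N j : ℕ) : proj N x j ≤ N := by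
  by_cases h : proj N x j = 0
  · omega
  · obtain ⟨t, ht, h2⟩ := (proj_eq_iff h).1 rfl
    rw [← h2]; exact hit_le ht

theorem proj_mem {x : ℕ → ℕ} (hx : x ∈ PathSpace) (N : ℕ) : proj N x ∈ PathSpaceN N := by
  refine ⟨fun i j hij h => ?_, proj_le x N⟩
  by_contra hc
  obtain ⟨t, ht, h2⟩ := (proj_eq_iff hc).1 rfl
  rcases hij.eq_or_lt with rfl | hij
  · exact hc h
  · obtain ⟨s, hs, hs2⟩ := hit_down ht i hij
    rw [proj_of_hit hs2] at h
    rw [← h2] at hc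
    exact hc (hx s t hs.le h)

theorem hit_hit {x : ℕ → ℕ} {M N : ℕ} (hMN : N ≤ M) (j s t : ℕ) (h : hitIdx x M s = (t : ℕ∞)) :
    hitIdx (proj M x) N j = (s : ℕ∞) ↔ hitIdx x N j = (t : ℕ∞) := by
  induction j generalizing s t with
  | zero =>
    rw [hit0, hit0, proj_of_hit h]
    refine and_congr_right fun _ => ⟨fun H i hi => ?_, fun H i hi => ?_⟩
    · by_contra hc
      obtain ⟨u, hu⟩ := hit_surj (x := x) (N := M) i (by omega)
      have := H u ((hit_lt hu h).2 hi)
      rw [proj_of_hit hu] at this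
      exact hc this
    · obtain ⟨u, hu, hu2⟩ := hit_down h i hi
      rw [proj_of_hit hu2]
      exact H u hu
  | succ j ih =>
    rw [hitS, hitS, proj_of_hit h]
    constructor
    · rintro ⟨s0, hs0, h1, h2, H⟩
      obtain ⟨t0, ht0, h0⟩ := hit_down h s0 hs0
      refine ⟨t0, ht0, (ih s0 t0 h0).1 h1, h2, fun i hi hi2 => ?_⟩
      by_contra hc
      obtain ⟨u, hu⟩ := hit_surj (x := x) (N := M) i (by omega)
      have := H u ((hit_lt h0 hu).2 hi) ((hit_lt hu h).2 hi2)
      rw [proj_of_hit hu] at this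
      exact hc this
    · rintro ⟨t0, ht0, h1, h2, H⟩
      obtain ⟨s0, h0⟩ := hit_surj (x := x) (N := M) t0 ((hit_le h1).trans hMN)
      refine ⟨s0, (hit_lt h0 h).2 ht0, (ih s0 t0 h0).2 h1, h2, fun i hi hi2 => ?_⟩
      obtain ⟨u, hu, hu2⟩ := hit_down h i hi2
      rw [proj_of_hit hu2]
      exact H u ((hit_lt h0 hu2).1 hi) hu

theorem proj_proj {x : ℕ → ℕ} {M N : ℕ} (hMN : N ≤ M) : proj N (proj M x) = proj N x := by
  funext j
  have key : ∀ k ≠ 0, (proj N (proj M x) j = k ↔ proj N x j = k) := by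
    intro k hk
    rw [proj_eq_iff hk, proj_eq_iff hk]
    constructor
    · rintro ⟨s, hs, h⟩
      obtain ⟨t, ht, h2⟩ := (proj_eq_iff hk).1 h
      exact ⟨t, (hit_hit hMN j s t ht).1 hs, h2⟩
    · rintro ⟨t, ht, h⟩
      obtain ⟨s, hs⟩ := hit_surj (x := x) (N := M) t ((hit_le ht).trans hMN)
      exact ⟨s, (hit_hit hMN j s t hs).2 ht, by rw [proj_of_hit hs, h]⟩
  by_cases h : proj N x j = 0
  · by_contra hc
    rw [h] at hc
    have := (key _ hc).1 rfl
    omega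
  · exact (key _ h).2 rfl

theorem iota_mem {x : ℕ → ℕ} (hx : x ∈ PathSpace) :
    (fun (N : ℕ+) (i : ℕ) => proj N x i) ∈ VirtualPathSpace := by
  refine ⟨fun N => proj_mem hx N, fun N => ?_⟩
  exact proj_proj (by simp)

theorem proj_large {x : ℕ → ℕ} {N i : ℕ} (h : ∀ j ≤ i, x j ≤ N) : proj N x i = x i := by
  apply proj_of_hit
  induction i with
  | zero => exact (hit0 _ _ _).2 ⟨h 0 le_rfl, by simp⟩
  | succ i ih =>
    exact (hitS _ _ _ _).2 ⟨i, by omega, ih (fun j hj => h j (by omega)), h _ le_rfl,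
      fun k _ _ => by omega⟩

theorem proj_eventually (x : ℕ → ℕ) (i : ℕ) : ∃ M, ∀ N ≥ M, proj N x i = x i := by
  refine ⟨∑ j ∈ Finset.range (i + 1), x j, fun N hN => proj_large fun j hj => ?_⟩
  exact (Finset.single_le_sum (f := x) (fun _ _ => Nat.zero_le _)
    (Finset.mem_range.2 (Nat.lt_succ_of_le hj))).trans hN

/-- A set of paths that is determined by the coordinates up to time `t`. -/
def DepSet (t : ℕ) (F : Set (ℕ → ℕ)) : Prop :=
  ∀ x y : ℕ → ℕ, (∀ i ≤ t, x i = y i) → x ∈ F → y ∈ F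

/-- Extension of a finite word by zeros. -/
def extw (t : ℕ) (w : Fin (t + 1) → ℕ) : ℕ → ℕ :=
  fun i => if h : i < t + 1 then w ⟨i, h⟩ else 0

/-- Cylinder. -/
def cylS (t : ℕ) (a : ℕ → ℕ) : Set (ℕ → ℕ) := {x | ∀ i ≤ t, x i = a i}

theorem measurableSet_cylS (t : ℕ) (a : ℕ → ℕ) : MeasurableSet (cylS t a) := by
  have : cylS t a = ⋂ i ∈ Set.Iic t, (fun x : ℕ → ℕ => x i) ⁻¹' {a i} := by
    ext x; simp [cylS]
  rw [this]
  exact MeasurableSet.biInter (Set.to_countable _)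
    fun i _ => measurable_pi_apply i (MeasurableSet.singleton _)

theorem dep_eq_iUnion {t : ℕ} {F : Set (ℕ → ℕ)} (h : DepSet t F) :
    F = ⋃ w ∈ {w | extw t w ∈ F}, cylS t (extw t w) := by
  ext x
  simp only [Set.mem_iUnion, Set.mem_ofPred_eq, exists_prop]
  constructor
  · intro hx
    have hw : ∀ i ≤ t, x i = extw t (fun i => x i) i := by
      intro i hi
      simp [extw, Nat.lt_succ_of_le hi]
    exact ⟨fun i => x i, h _ _ hw hx, hw⟩
  · rintro ⟨w, hw, hx⟩
    exact h _ _ (fun i hi => (hx i hi).symm) hw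

theorem cylS_disj {t : ℕ} {w w' : Fin (t + 1) → ℕ} {x : ℕ → ℕ} (h : x ∈ cylS t (extw t w))
    (h' : x ∈ cylS t (extw t w')) : w = w' := by
  funext i
  have h1 := h i (Nat.lt_succ_iff.1 i.2)
  have h2 := h' i (Nat.lt_succ_iff.1 i.2)
  simp only [extw, i.2, dite_true] at h1 h2
  exact h1.symm.trans h2

theorem DepSet.meas {t : ℕ} {F : Set (ℕ → ℕ)} (h : DepSet t F) : MeasurableSet F := by
  rw [dep_eq_iUnion h]
  exact MeasurableSet.biUnion (Set.to_countable _) fun w _ => measurableSet_cylS _ _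

theorem meas_coord (t a : ℕ) : MeasurableSet {x : ℕ → ℕ | x t = a} :=
  measurableSet_eq_fun (measurable_pi_apply t) measurable_const

/-- One step property of cylinders. -/
def StepCyl (μ : Measure (ℕ → ℕ)) (κ : ℕ → ℕ → ENNReal) : Prop :=
  ∀ (t : ℕ) (a : ℕ → ℕ), μ (cylS (t + 1) a) = μ (cylS t a) * κ (a t) (a (t + 1))

theorem onestep {μ : Measure (ℕ → ℕ)} {κ : ℕ → ℕ → ENNReal} (H : StepCyl μ κ)
    {t : ℕ} {F : Set (ℕ → ℕ)} (hF : DepSet t F) (a b : ℕ) :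
    μ {x | (x ∈ F ∧ x t = a) ∧ x (t + 1) = b} = μ {x | x ∈ F ∧ x t = a} * κ a b := by
  have hG : DepSet t {x | x ∈ F ∧ x t = a} := fun x y hxy hx =>
    ⟨hF x y hxy hx.1, (hxy t le_rfl) ▸ hx.2⟩
  set G := {x | x ∈ F ∧ x t = a} with hGdef
  have e1 : {x | (x ∈ F ∧ x t = a) ∧ x (t + 1) = b} =
      ⋃ w ∈ {w | extw t w ∈ G}, cylS (t + 1) (Function.update (extw t w) (t + 1) b) := by
    have : {x | (x ∈ F ∧ x t = a) ∧ x (t + 1) = b} = G ∩ {x | x (t + 1) = b} := rfl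
    rw [this]
    conv_lhs => rw [dep_eq_iUnion hG]
    ext x
    simp only [Set.mem_inter_iff, Set.mem_iUnion, Set.mem_ofPred_eq, exists_prop, cylS]
    constructor
    · rintro ⟨⟨w, hw, hx⟩, hb⟩
      refine ⟨w, hw, fun i hi => ?_⟩
      rcases hi.eq_or_lt with rfl | hi
      · simpa using hb
      · rw [Function.update_of_ne (by omega)]; exact hx i (by omega)
    · rintro ⟨w, hw, hx⟩
      refine ⟨⟨w, hw, fun i hi => ?_⟩, ?_⟩
      · rw [hx i (by omega), Function.update_of_ne (by omega)]
      · rw [hx _ le_rfl]; simp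
  have hsub : ∀ w, cylS (t + 1) (Function.update (extw t w) (t + 1) b) ⊆ cylS t (extw t w) := by
    intro w x hx i hi
    rw [hx i (by omega), Function.update_of_ne (by omega)]
  rw [e1, measure_biUnion (Set.to_countable _) ?_ (fun w _ => measurableSet_cylS _ _)]
  · conv_rhs => rw [dep_eq_iUnion hG]
    rw [measure_biUnion (Set.to_countable _) ?_ (fun w _ => measurableSet_cylS _ _),
      ← ENNReal.tsum_mul_right]
    · refine tsum_congr fun w => ?_
      rw [H]
      have h1 : cylS t (Function.update (extw t w) (t + 1) b) = cylS t (extw t w) := by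
        ext x
        refine forall₂_congr fun i hi => ?_
        rw [Function.update_of_ne (by omega)]
      have h2 : extw t (w : Fin (t + 1) → ℕ) t = a := w.2.2
      rw [h1, Function.update_of_ne (by omega), h2, Function.update_self]
    · intro w _ w' _ hne
      exact Set.disjoint_left.2 fun x hx hx' => hne (cylS_disj hx hx')
  · intro w _ w' _ hne
    exact Set.disjoint_left.2 fun x hx hx' => hne (cylS_disj (hsub _ hx) (hsub _ hx'))

/-- Excursion kernels. -/
noncomputable def excQ (N : ℕ) (κ : ℕ → ℕ → ENNReal) : ℕ → ℕ → ℕ → ENNReal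
  | 0, a, b => κ a b
  | n + 1, a, b => ∑' c, if N < c then κ a c * excQ N κ n c b else 0

/-- Excursion sets. -/
def excE (N n t b : ℕ) : Set (ℕ → ℕ) :=
  {x | (∀ i, t < i → i ≤ t + n → N < x i) ∧ x (t + n + 1) = b}

theorem excE_dep (N n t b : ℕ) : DepSet (t + n + 1) (excE N n t b) := by
  intro x y hxy hx
  exact ⟨fun i hi hi2 => hxy i (by omega) ▸ hx.1 i hi hi2, hxy _ le_rfl ▸ hx.2⟩

theorem DepSet.mono {s t : ℕ} (h : s ≤ t) {F : Set (ℕ → ℕ)} (hF : DepSet s F) : DepSet t F :=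
  fun x y hxy hx => hF x y (fun i hi => hxy i (hi.trans h)) hx

theorem partition_meas {Ω : Type*} [MeasurableSpace Ω] (μ : Measure Ω) {S : Set Ω}
    (hS : MeasurableSet S) (f : Ω → ℕ) (hf : Measurable f) :
    μ S = ∑' c, μ (S ∩ {x | f x = c}) := by
  rw [← measure_iUnion]
  · congr 1; ext x; simp
  · intro c d hcd
    exact Set.disjoint_left.2 fun x hx hx' => hcd (hx.2.symm.trans hx'.2)
  · exact fun c => hS.inter (hf (MeasurableSet.singleton c))

theorem exc_meas {μ : Measure (ℕ → ℕ)} {κ : ℕ → ℕ → ENNReal} (H : StepCyl μ κ) (N b n : ℕ) :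
    ∀ {t : ℕ} {F : Set (ℕ → ℕ)} (_ : DepSet t F) (a : ℕ),
    μ ({x | x ∈ F ∧ x t = a} ∩ excE N n t b) = μ {x | x ∈ F ∧ x t = a} * excQ N κ n a b := by
  induction n with
  | zero =>
    intro t F hF a
    rw [excQ, ← onestep H hF]
    congr 1
    ext x
    simp only [Set.mem_inter_iff, excE, Set.mem_ofPred_eq, add_zero]
    refine and_congr_right fun _ => ⟨fun h => h.2, fun h => ⟨fun i _ _ => by omega, h⟩⟩
  | succ n ih =>
    intro t F hF a
    have hG : DepSet t {x | x ∈ F ∧ x t = a} := fun x y hxy hx =>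
      ⟨hF x y hxy hx.1, (hxy t le_rfl) ▸ hx.2⟩
    rw [partition_meas μ (hG.meas.inter (excE_dep _ _ _ _).meas) (fun x => x (t + 1))
      (measurable_pi_apply _), excQ, ← ENNReal.tsum_mul_left]
    refine tsum_congr fun c => ?_
    split_ifs with hc
    · rw [← mul_assoc, ← onestep H hF a c]
      refine Eq.trans ?_ (ih (hG.mono (show t ≤ t + 1 by omega)) c)
      congr 1
      ext x
      simp only [Set.mem_inter_iff, excE, Set.mem_ofPred_eq]
      have e : t + 1 + n + 1 = t + (n + 1) + 1 := by ring
      rw [e]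
      constructor
      · rintro ⟨⟨h1, h2, h3⟩, h4⟩
        exact ⟨⟨h1, h4⟩, fun i hi hi2 => h2 i (by omega) (by omega), h3⟩
      · rintro ⟨⟨h1, h4⟩, h2, h3⟩
        refine ⟨⟨h1, fun i hi hi2 => ?_, h3⟩, h4⟩
        rcases (show t + 1 ≤ i from hi).eq_or_lt with rfl | hi
        · omega
        · exact h2 i hi (by omega)
    · rw [mul_zero]
      convert measure_empty (μ := μ)
      rw [Set.eq_empty_iff_forall_notMem]
      rintro x ⟨⟨-, h⟩, hx⟩
      have := h.1 (t + 1) (by omega) (by omega)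
      simp only [Set.mem_ofPred_eq] at hx
      omega

theorem excQ_sum_le {κ : ℕ → ℕ → ENNReal} (hκ : ∀ a, ∑' b, κ a b ≤ 1) (N n : ℕ) (a : ℕ) :
    ∑ b ∈ Finset.range (N + 1), ∑ m ∈ Finset.range n, excQ N κ m a b ≤ 1 := by
  induction n generalizing a with
  | zero => simp
  | succ n ih =>
    calc ∑ b ∈ Finset.range (N + 1), ∑ m ∈ Finset.range (n + 1), excQ N κ m a b
        = ∑ b ∈ Finset.range (N + 1), κ a b + ∑' c, (if N < c then κ a c *
          ∑ b ∈ Finset.range (N + 1), ∑ m ∈ Finset.range n, excQ N κ m c b else 0) := by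
          simp_rw [Finset.sum_range_succ' _ n]
          rw [Finset.sum_add_distrib, add_comm]
          congr 1
          simp_rw [excQ]
          simp_rw [← Summable.tsum_finsetSum (fun _ _ => ENNReal.summable)]
          refine tsum_congr fun c => ?_
          split_ifs
          · simp_rw [Finset.mul_sum]
          · simp
      _ ≤ ∑' c, (if N < c then 0 else κ a c) + ∑' c, (if N < c then κ a c else 0) := by
          gcongr
          · rw [tsum_eq_sum (s := Finset.range (N + 1))]
            · refine Finset.sum_le_sum fun c hc => ?_
              rw [if_neg (by simp at hc; omega)]
            · intro c hc
              rw [if_pos (by simp at hc; omega)]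
          · split_ifs
            · exact (mul_le_mul_right (ih _) _).trans (by simp)
            · exact le_rfl
      _ = ∑' c, κ a c := by
          rw [← ENNReal.tsum_add]
          refine tsum_congr fun c => ?_
          split_ifs <;> simp
      _ ≤ 1 := hκ a

/-- Green type kernel of the trace. -/
noncomputable def excG (N : ℕ) (κ : ℕ → ℕ → ENNReal) (a b : ℕ) : ENNReal := ∑' n, excQ N κ n a b

theorem excG_sum_le {κ : ℕ → ℕ → ENNReal} (hκ : ∀ a, ∑' b, κ a b ≤ 1) (N : ℕ) (a : ℕ) :
    ∑ b ∈ Finset.range (N + 1), excG N κ a b ≤ 1 := by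
  unfold excG
  rw [← Summable.tsum_finsetSum (fun _ _ => ENNReal.summable)]
  rw [ENNReal.tsum_eq_iSup_nat]
  refine iSup_le fun n => ?_
  rw [Finset.sum_comm]
  exact excQ_sum_le hκ N n a

/-- Cylinder of the trace. -/
def pcyl (N j : ℕ) (a : ℕ → ℕ) : Set (ℕ → ℕ) := {x | ∀ i ≤ j, proj N x i = a i}

theorem hitset_dep (N j t : ℕ) : DepSet t {x | hitIdx x N j = (t : ℕ∞)} :=
  fun _ _ hxy hx => hit_dep hxy hx

theorem measurable_proj (N j : ℕ) : Measurable (fun x : ℕ → ℕ => proj N x j) := by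
  have hne : ∀ k ≠ 0, MeasurableSet {x : ℕ → ℕ | proj N x j = k} := by
    intro k hk
    have : {x : ℕ → ℕ | proj N x j = k} =
        ⋃ t : ℕ, {x | hitIdx x N j = (t : ℕ∞)} ∩ {x | x t = k} := by
      ext x
      simp [proj_eq_iff hk]
    rw [this]
    exact MeasurableSet.iUnion fun t => (hitset_dep N j t).meas.inter (meas_coord t k)
  refine measurable_to_countable' fun k => ?_
  by_cases hk : k = 0
  · have : (fun x : ℕ → ℕ => proj N x j) ⁻¹' {k} =
        (⋃ k : {k : ℕ // k ≠ 0}, {x : ℕ → ℕ | proj N x j = k.1})ᶜ := by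
      ext x
      simp only [hk, Set.mem_preimage, Set.mem_singleton_iff, Set.mem_compl_iff, Set.mem_iUnion,
        Set.mem_ofPred_eq, Subtype.exists, exists_prop, not_exists, not_and]
      exact ⟨fun h a ha h' => ha (h'.symm.trans h), fun h => by
        by_contra hc
        exact h _ hc rfl⟩
    rw [this]
    exact (MeasurableSet.iUnion fun k : {k : ℕ // k ≠ 0} => hne k.1 k.2).compl
  · exact hne k hk

theorem measurableSet_pcyl (N j : ℕ) (a : ℕ → ℕ) : MeasurableSet (pcyl N j a) := by
  have : pcyl N j a = ⋂ i ∈ Set.Iic j, (fun x : ℕ → ℕ => proj N x i) ⁻¹' {a i} := by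
    ext x; simp [pcyl]
  rw [this]
  exact MeasurableSet.biInter (Set.to_countable _)
    fun i _ => measurable_proj N i (MeasurableSet.singleton _)

theorem trace_dep (N j t : ℕ) (a : ℕ → ℕ) :
    DepSet t (pcyl N j a ∩ {x | hitIdx x N j = (t : ℕ∞)}) := by
  rintro x y hxy ⟨h1, h2⟩
  refine ⟨fun i hi => ?_, hit_dep hxy h2⟩
  have : ∃ s ≤ t, hitIdx x N i = (s : ℕ∞) := by
    rcases hi.eq_or_lt with rfl | hi
    · exact ⟨t, le_rfl, h2⟩
    · obtain ⟨s, hs, h⟩ := hit_down h2 i hi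
      exact ⟨s, hs.le, h⟩
  obtain ⟨s, hs, h⟩ := this
  rw [← h1 i hi, proj_of_hit h, proj_of_hit (hit_dep (fun i hi => hxy i (hi.trans hs)) h),
    hxy s hs]

theorem trace_step {μ : Measure (ℕ → ℕ)} {κ : ℕ → ℕ → ENNReal} (H : StepCyl μ κ) (N j : ℕ)
    (a : ℕ → ℕ) (ha : a j ≠ 0) (b : ℕ) (hb : b ≠ 0) (hbN : b ≤ N) :
    μ (pcyl N j a ∩ {x | proj N x (j + 1) = b}) = μ (pcyl N j a) * excG N κ (a j) b := by
  have hT : ∀ x ∈ pcyl N j a, ∃ t : ℕ, hitIdx x N j = (t : ℕ∞) := by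
    intro x hx
    obtain ⟨t, ht, -⟩ := (proj_eq_iff ha).1 (hx j le_rfl)
    exact ⟨t, ht⟩
  have e1 : ∀ S : Set (ℕ → ℕ), MeasurableSet S → μ (pcyl N j a ∩ S) =
      ∑' t : ℕ, μ ((pcyl N j a ∩ {x | hitIdx x N j = (t : ℕ∞)}) ∩ S) := by
    intro S hS
    rw [← measure_iUnion]
    · congr 1
      ext x
      simp only [Set.mem_inter_iff, Set.mem_iUnion, Set.mem_ofPred_eq]
      constructor
      · rintro ⟨h1, h2⟩
        obtain ⟨t, ht⟩ := hT x h1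
        exact ⟨t, ⟨h1, ht⟩, h2⟩
      · rintro ⟨t, ⟨h1, -⟩, h2⟩
        exact ⟨h1, h2⟩
    · intro s t hst
      exact Set.disjoint_left.2 fun x hx hx' => hst (hit_inj hx'.1.2 hx.1.2)
    · exact fun t => (trace_dep N j t a).meas.inter hS
  have e0 : μ (pcyl N j a) = ∑' t : ℕ, μ (pcyl N j a ∩ {x | hitIdx x N j = (t : ℕ∞)}) := by
    have := e1 Set.univ MeasurableSet.univ
    simpa using this
  rw [e1 _ (measurableSet_eq_fun (measurable_proj N (j + 1)) measurable_const), e0, ← ENNReal.tsum_mul_right]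
  refine tsum_congr fun t => ?_
  set F := pcyl N j a ∩ {x | hitIdx x N j = (t : ℕ∞)} with hF
  have hFdep : DepSet t F := trace_dep N j t a
  have hFa : F = {x | x ∈ F ∧ x t = a j} := by
    ext x
    simp only [Set.mem_ofPred_eq, iff_self_and]
    intro hx
    rw [← hx.1 j le_rfl, proj_of_hit hx.2]
  have e2 : F ∩ {x | proj N x (j + 1) = b} =
      ⋃ n, {x | x ∈ F ∧ x t = a j} ∩ excE N n t b := by
    rw [← hFa, ← Set.inter_iUnion]
    ext x
    simp only [Set.mem_inter_iff, Set.mem_iUnion, Set.mem_ofPred_eq, excE]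
    refine and_congr_right fun hx => ?_
    rw [proj_eq_iff hb]
    constructor
    · rintro ⟨u, hu, rfl⟩
      obtain ⟨s, hs, h1, h2, h3⟩ := (hitS _ _ _ _).1 hu
      have := hit_inj hx.2 h1
      subst this
      obtain ⟨n, rfl⟩ := Nat.exists_eq_add_of_lt hs
      exact ⟨n, fun i hi hi2 => h3 i hi (by omega), rfl⟩
    · rintro ⟨n, h1, h2⟩
      refine ⟨t + n + 1, (hitS _ _ _ _).2 ⟨t, by omega, hx.2, by omega, fun i hi hi2 =>
        h1 i hi (by omega)⟩, h2⟩
  rw [e2, measure_iUnion, excG, ← ENNReal.tsum_mul_left]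
  · refine tsum_congr fun n => ?_
    rw [exc_meas H N b n hFdep, ← hFa]
  · intro m n hmn
    refine Set.disjoint_left.2 fun x hx hx' => hmn ?_
    obtain ⟨-, h1, h2⟩ := hx
    obtain ⟨-, h1', h2'⟩ := hx'
    rcases lt_trichotomy m n with h | h | h
    · have := h1' (t + m + 1) (by omega) (by omega)
      omega
    · exact h
    · have := h1 (t + n + 1) (by omega) (by omega)
      omega
  · intro n
    rw [← hFa]
    exact hFdep.meas.inter (excE_dep _ _ _ _).meas

theorem chain_isProb {Ω : Type*} [MeasurableSpace Ω] {P : Measure Ω} {X : ℕ → Ω → ℕ}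
    {ν : ℕ → ℝ} {K : ℕ → ℕ → ℝ} (hν : IsProbVec ν) (hX : IsMarkovChain P X ν K) :
    IsProbabilityMeasure P := by
  refine ⟨?_⟩
  rw [partition_meas P MeasurableSet.univ (X 0) (hX.1 0)]
  have : ∀ c, P (Set.univ ∩ {ω | X 0 ω = c}) = ENNReal.ofReal (ν c) := by
    intro c
    have := hX.2 0 (fun _ => c)
    simpa using this
  simp_rw [this]
  rw [← ENNReal.ofReal_tsum_of_nonneg hν.1 hν.2.summable, hν.2.tsum_eq, ENNReal.ofReal_one]

theorem chain_step {Ω : Type*} [MeasurableSpace Ω] {P : Measure Ω} {X : ℕ → Ω → ℕ}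
    {ν : ℕ → ℝ} {K : ℕ → ℕ → ℝ} (hν : ∀ a, 0 ≤ ν a) (hK : ∀ a b, 0 ≤ K a b)
    (hX : IsMarkovChain P X ν K) (l : ℕ) (a : ℕ → ℕ) :
    P {ω | ∀ i ≤ l + 1, X i ω = a i} =
      P {ω | ∀ i ≤ l, X i ω = a i} * ENNReal.ofReal (K (a l) (a (l + 1))) := by
  rw [hX.2, hX.2, Finset.prod_Icc_succ_top (by omega), ← mul_assoc, ENNReal.ofReal_mul]
  · simp
  · exact mul_nonneg (hν _) (Finset.prod_nonneg fun _ _ => hK _ _)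

theorem chain_of_step {Ω : Type*} [MeasurableSpace Ω] {P : Measure Ω} [IsProbabilityMeasure P]
    {X : ℕ → Ω → ℕ} {K : ℕ → ℕ → ℝ} (hX : ∀ i, Measurable (X i))
    (H : ∀ (l : ℕ) (a : ℕ → ℕ), P.real {ω | ∀ i ≤ l + 1, X i ω = a i} =
      P.real {ω | ∀ i ≤ l, X i ω = a i} * K (a l) (a (l + 1))) :
    IsMarkovChain P X (fun a => P.real {ω | X 0 ω = a}) K := by
  refine ⟨hX, fun l a => ?_⟩
  have : P.real {ω | ∀ i ≤ l, X i ω = a i} =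
      P.real {ω | X 0 ω = a 0} * ∏ k ∈ Finset.Icc 1 l, K (a (k - 1)) (a k) := by
    induction l with
    | zero => simp
    | succ l ih =>
      rw [H, ih, Finset.prod_Icc_succ_top (by omega), ← mul_assoc]
      simp
  rw [← this]
  simp

theorem init_probVec {Ω : Type*} [MeasurableSpace Ω] {P : Measure Ω} [IsProbabilityMeasure P]
    {Z : Ω → ℕ} (hZ : Measurable Z) : IsProbVec (fun a => P.real {ω | Z ω = a}) := by
  refine ⟨fun a => measureReal_nonneg, ?_⟩
  have h := partition_meas P MeasurableSet.univ Z hZ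
  simp only [measure_univ, Set.univ_inter] at h
  have := ENNReal.hasSum_toReal (f := fun a => P {ω | Z ω = a}) (by rw [← h]; simp)
  rw [← ENNReal.tsum_toReal_eq (fun a => measure_ne_top _ _), ← h] at this
  rw [ENNReal.toReal_one] at this
  exact this

theorem step_sum {Ω : Type*} [MeasurableSpace Ω] {P : Measure Ω} [IsProbabilityMeasure P]
    {Z : Ω → ℕ} (hZ : Measurable Z) {S : Set Ω} (hS : MeasurableSet S) :
    HasSum (fun b => P.real (S ∩ {ω | Z ω = b})) (P.real S) := by
  have h := partition_meas P hS Z hZ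
  have := ENNReal.hasSum_toReal (f := fun a => P (S ∩ {ω | Z ω = a}))
    (by rw [← h]; exact measure_ne_top _ _)
  rw [← ENNReal.tsum_toReal_eq (fun a => measure_ne_top _ _), ← h] at this
  exact this

theorem set_succ {Ω : Type*} (X : ℕ → Ω → ℕ) (l : ℕ) (a : ℕ → ℕ) :
    {ω | ∀ i ≤ l + 1, X i ω = a i} =
      {ω | ∀ i ≤ l, X i ω = a i} ∩ {ω | X (l + 1) ω = a (l + 1)} := by
  ext ω
  simp only [Set.mem_inter_iff, Set.mem_ofPred_eq]
  constructor
  · intro h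
    exact ⟨fun i hi => h i (by omega), h _ le_rfl⟩
  · rintro ⟨h1, h2⟩ i hi
    rcases hi.eq_or_lt with rfl | hi
    · exact h2
    · exact h1 i (by omega)

theorem meas_cyl {Ω : Type*} [MeasurableSpace Ω] {X : ℕ → Ω → ℕ} (hX : ∀ i, Measurable (X i))
    (l : ℕ) (a : ℕ → ℕ) : MeasurableSet {ω | ∀ i ≤ l, X i ω = a i} := by
  have : {ω | ∀ i ≤ l, X i ω = a i} = ⋂ i ∈ Set.Iic l, (X i) ⁻¹' {a i} := by
    ext x; simp
  rw [this]
  exact MeasurableSet.biInter (Set.to_countable _) fun i _ => hX i (MeasurableSet.singleton _)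

/-- The transition matrix of the trace. -/
noncomputable def trK (N : ℕ) (κ : ℕ → ℕ → ENNReal) (a b : ℕ) : ℝ :=
  if 1 ≤ a ∧ a ≤ N then
    (if b = 0 then 1 - ∑ c ∈ Finset.range N, (excG N κ a (c + 1)).toReal
      else if b ≤ N then (excG N κ a b).toReal else 0)
  else if b = a then 1 else 0

theorem trK_mem {κ : ℕ → ℕ → ENNReal} (hκ : ∀ a, ∑' b, κ a b ≤ 1) (N : ℕ) :
    MemKN N (trK N κ) := by
  have hle : ∀ a, ∑ c ∈ Finset.range N, (excG N κ a (c + 1)).toReal ≤ 1 := by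
    intro a
    have h := excG_sum_le hκ N a
    rw [Finset.sum_range_succ'] at h
    have h2 : ∑ c ∈ Finset.range N, excG N κ a (c + 1) ≤ 1 := le_trans le_self_add h
    rw [← ENNReal.toReal_sum]
    · exact ENNReal.toReal_le_of_le_ofReal zero_le_one (by simpa using h2)
    · intro c hc hcc
      have := Finset.single_le_sum (f := fun c => excG N κ a (c + 1)) (fun _ _ => zero_le) hc
      simp only [hcc, top_le_iff] at this
      rw [this] at h2
      simp at h2
  refine ⟨⟨fun a b => ?_, fun a => ?_⟩, fun a ha => by simp [trK, ha]⟩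
  · unfold trK
    have := hle a
    split_ifs <;> first | positivity | linarith
  · by_cases ha : 1 ≤ a ∧ a ≤ N
    · have hs := hasSum_sum_of_ne_finset_zero (L := .unconditional ℕ) (f := trK N κ a) (s := Finset.range (N + 1)) (by
        intro b hb
        simp only [Finset.mem_range] at hb
        rw [trK, if_pos ha, if_neg (by omega), if_neg (by omega)])
      have e : ∑ b ∈ Finset.range (N + 1), trK N κ a b = 1 := by
        rw [Finset.sum_range_succ']
        have : ∑ c ∈ Finset.range N, trK N κ a (c + 1) =
            ∑ c ∈ Finset.range N, (excG N κ a (c + 1)).toReal := by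
          refine Finset.sum_congr rfl fun c hc => ?_
          simp only [Finset.mem_range] at hc
          rw [trK, if_pos ha, if_neg (by omega), if_pos (by omega)]
        rw [this]
        simp [trK, ha]
      rwa [e] at hs
    · have : trK N κ a = fun b => if b = a then 1 else 0 := by
        funext b; simp [trK, ha]
      rw [this]
      exact hasSum_ite_eq a 1

theorem path_ae {μ : Measure (ℕ → ℕ)} {κ : ℕ → ℕ → ENNReal} (H : StepCyl μ κ)
    (h0 : ∀ b ≠ 0, κ 0 b = 0) : ∀ᵐ x ∂μ, x ∈ PathSpace := by
  have h1 : ∀ i b : ℕ, b ≠ 0 → ∀ᵐ x ∂μ, ¬ (x i = 0 ∧ x (i + 1) = b) := by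
    intro i b hb
    rw [ae_iff]
    have := onestep H (t := i) (F := Set.univ) (fun _ _ _ _ => trivial) 0 b
    rw [h0 b hb, mul_zero] at this
    simpa using this
  have h2 : ∀ᵐ x ∂μ, ∀ i b : ℕ, b ≠ 0 → ¬ (x i = 0 ∧ x (i + 1) = b) := by
    rw [ae_all_iff]; intro i
    rw [ae_all_iff]; intro b
    by_cases hb : b = 0
    · simp [hb]
    · filter_upwards [h1 i b hb] with x hx _ using hx
  filter_upwards [h2] with x hx i j hij hi
  induction j, hij using Nat.le_induction with
  | base => exact hi
  | succ j _ ih =>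
    by_contra hc
    exact hx j _ hc ⟨ih, rfl⟩

theorem trace_chain {μ : Measure (ℕ → ℕ)} [IsProbabilityMeasure μ] {κ : ℕ → ℕ → ENNReal}
    (H : StepCyl μ κ) (h0 : ∀ b ≠ 0, κ 0 b = 0) (N : ℕ) :
    IsMarkovChain μ (fun i x => proj N x i) (fun a => μ.real {x | proj N x 0 = a}) (trK N κ) := by
  refine chain_of_step (fun i => measurable_proj N i) fun l a => ?_
  rw [set_succ (fun i x => proj N x i)]
  generalize a (l + 1) = b
  change μ.real (pcyl N l a ∩ {x | proj N x (l + 1) = b}) = μ.real (pcyl N l a) * _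
  have hgt : ∀ b, N < b → pcyl N l a ∩ {x | proj N x (l + 1) = b} = ∅ := by
    intro b hb
    rw [Set.eq_empty_iff_forall_notMem]
    rintro x ⟨-, hx⟩
    have := proj_le x N (l + 1)
    simp only [Set.mem_ofPred_eq] at hx
    omega
  by_cases ha : a l ≤ N
  swap
  · have : pcyl N l a = ∅ := by
      rw [Set.eq_empty_iff_forall_notMem]
      intro x hx
      have := proj_le x N l
      have := hx l le_rfl
      omega
    simp [this]
  by_cases ha0 : a l = 0
  · have hae := path_ae H h0
    by_cases hb : b = 0
    · have e : trK N κ (a l) b = 1 := by simp [trK, ha0, hb]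
      rw [e, mul_one]
      apply measureReal_congr
      filter_upwards [hae] with x hx
      have : x ∈ pcyl N l a → proj N x (l + 1) = b := fun h => by
        rw [hb]
        exact (proj_mem hx N).1 l (l + 1) (by omega) ((h l le_rfl).trans ha0)
      apply propext
      exact ⟨fun h => h.1, fun h => ⟨h, this h⟩⟩
    · have e : trK N κ (a l) b = 0 := by simp [trK, ha0, hb]
      rw [e, mul_zero, measureReal_eq_zero_iff]
      rw [measure_eq_zero_iff_ae_notMem]
      filter_upwards [hae] with x hx h
      apply hb
      rw [← h.2]
      exact (proj_mem hx N).1 l (l + 1) (by omega) ((h.1 l le_rfl).trans ha0)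
  have ha1 : 1 ≤ a l ∧ a l ≤ N := by omega
  have hpos : ∀ b ≠ 0, b ≤ N → μ.real (pcyl N l a ∩ {x | proj N x (l + 1) = b}) =
      μ.real (pcyl N l a) * (excG N κ (a l) b).toReal := by
    intro b hb hbN
    rw [Measure.real, trace_step H N l a ha0 b hb hbN, ENNReal.toReal_mul]
    rfl
  by_cases hb : b = 0
  · have hs := step_sum (P := μ) (measurable_proj N (l + 1)) (measurableSet_pcyl N l a)
    have hs2 := hasSum_sum_of_ne_finset_zero (L := .unconditional ℕ) (s := Finset.range (N + 1))
      (f := fun b => μ.real (pcyl N l a ∩ {x | proj N x (l + 1) = b})) (by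
        intro b hb
        simp only [Finset.mem_range] at hb
        rw [hgt b (by omega)]; simp)
    have e := hs.unique hs2
    rw [Finset.sum_range_succ'] at e
    have e2 : ∑ c ∈ Finset.range N, μ.real (pcyl N l a ∩ {x | proj N x (l + 1) = c + 1}) =
        ∑ c ∈ Finset.range N, μ.real (pcyl N l a) * (excG N κ (a l) (c + 1)).toReal := by
      refine Finset.sum_congr rfl fun c hc => ?_
      simp only [Finset.mem_range] at hc
      exact hpos (c + 1) (by omega) (by omega)
    rw [e2, ← Finset.mul_sum] at e
    rw [trK, if_pos ha1, if_pos hb, hb]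
    linarith
  · by_cases hbN : b ≤ N
    · rw [trK, if_pos ha1, if_neg hb, if_pos hbN]
      exact hpos b hb hbN
    · rw [trK, if_pos ha1, if_neg hb, if_neg hbN, hgt b (by omega)]
      simp

theorem forward {Ω : Type*} [MeasurableSpace Ω] {P : Measure Ω} {X : ℕ → Ω → ℕ}
    {ν : ℕ → ℝ} {K : ℕ → ℕ → ℝ} (hν : IsProbVec ν) (hK : MemK K) (hX : IsMarkovChain P X ν K) :
    IsVMC P fun ω (N : ℕ+) (i : ℕ) => proj N (fun j => X j ω) i := by
  have hP := chain_isProb hν hX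
  have hXm : Measurable (fun ω j => X j ω) := measurable_pi_lambda _ hX.1
  set μ := P.map (fun ω j => X j ω) with hμ
  have hμp : IsProbabilityMeasure μ := Measure.isProbabilityMeasure_map hXm.aemeasurable
  let κ : ℕ → ℕ → ENNReal := fun a b => ENNReal.ofReal (K a b)
  have H : StepCyl μ κ := by
    intro t a
    rw [hμ, Measure.map_apply hXm (measurableSet_cylS _ _),
      Measure.map_apply hXm (measurableSet_cylS _ _)]
    exact chain_step hν.1 hK.1.1 hX t a
  have hκ : ∀ a, ∑' b, κ a b ≤ 1 := by
    intro a
    rw [← ENNReal.ofReal_tsum_of_nonneg (hK.1.1 a) (hK.1.2 a).summable, (hK.1.2 a).tsum_eq,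
      ENNReal.ofReal_one]
  have h0 : ∀ b ≠ 0, κ 0 b = 0 := by
    intro b hb
    have := sum_le_hasSum {0, b} (fun c _ => hK.1.1 0 c) (hK.1.2 0)
    rw [Finset.sum_pair hb.symm, hK.2] at this
    exact ENNReal.ofReal_eq_zero.2 (by linarith)
  refine ⟨?_, fun N => ?_⟩
  · have := path_ae H h0
    filter_upwards [ae_of_ae_map hXm.aemeasurable this] with ω hω
    exact iota_mem hω
  · have hc := trace_chain H h0 N
    refine ⟨_, _, init_probVec (P := μ) (measurable_proj N 0), fun a ha => ?_, trK_mem hκ N,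
      fun i => (measurable_proj N i).comp hXm, fun l a => ?_⟩
    · have : {x | proj N x 0 = a} = ∅ := by
        rw [Set.eq_empty_iff_forall_notMem]
        intro x hx
        have := proj_le x N 0
        simp only [Set.mem_ofPred_eq] at hx
        omega
      simp only [this, measureReal_empty]
    · rw [← hc.2 l a]
      exact (Measure.map_apply hXm (measurableSet_pcyl N l a)).symm

open Filter Topology in
theorem backward {Ω : Type*} [MeasurableSpace Ω] {P : Measure Ω} (X : Ω → ℕ+ → ℕ → ℕ)
    (hX : IsVMC P X)
    (hι : ∀ᵐ ω ∂P, ∃ y ∈ PathSpace, X ω = fun (N : ℕ+) (i : ℕ) => proj N y i) :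
    ∃ (Y : ℕ → Ω → ℕ) (ν : ℕ → ℝ) (K : ℕ → ℕ → ℝ),
      IsProbVec ν ∧ MemK K ∧ IsMarkovChain P Y ν K ∧
      ∀ᵐ ω ∂P, X ω = fun (N : ℕ+) (i : ℕ) => proj N (fun j => Y j ω) i := by
  obtain ⟨-, hX⟩ := hX
  choose νn Kn hν hν0 hKn hchain using hX
  have hP : IsProbabilityMeasure P := chain_isProb (hν 1) (hchain 1)
  let Z : ℕ → ℕ → Ω → ℕ := fun n i ω => X ω n.succPNat i
  have hZm : ∀ n i, Measurable (Z n i) := fun n i => (hchain n.succPNat).1 i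
  let Y : ℕ → Ω → ℕ := fun i ω => liminf (fun n => Z n i ω) atTop
  have hYm : ∀ i, Measurable (Y i) := fun i => Measurable.liminf (fun n => hZm n i)
  have hY : ∀ (ω : Ω) (y : ℕ → ℕ), (X ω = fun (N : ℕ+) (i : ℕ) => proj N y i) →
      ∀ i, (∀ᶠ n in atTop, Z n i ω = y i) ∧ Y i ω = y i := by
    intro ω y h i
    have h1 : ∀ᶠ n in atTop, Z n i ω = y i := by
      obtain ⟨M, hM⟩ := proj_eventually y i
      filter_upwards [eventually_ge_atTop M] with n hn
      simp only [Z, h]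
      exact hM _ (by simp; omega)
    refine ⟨h1, ?_⟩
    have : Tendsto (fun n => Z n i ω) atTop (𝓝 (y i)) :=
      tendsto_const_nhds.congr' (by filter_upwards [h1] with n hn using hn.symm)
    exact this.liminf_eq
  have hae : ∀ᵐ ω ∂P, ∀ i, ∀ᶠ n in atTop, Z n i ω = Y i ω := by
    filter_upwards [hι] with ω ⟨y, _, h⟩ i
    obtain ⟨h1, h2⟩ := hY ω y h i
    rw [h2]; exact h1
  have hfin : ∀ᵐ ω ∂P, X ω = fun (N : ℕ+) (i : ℕ) => proj N (fun j => Y j ω) i := by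
    filter_upwards [hι] with ω ⟨y, _, h⟩
    have : (fun j => Y j ω) = y := funext fun i => (hY ω y h i).2
    rw [this]; exact h
  -- convergence of cylinder probabilities
  have hlim : ∀ (l : ℕ) (w : ℕ → ℕ), Tendsto (fun n => P.real {ω | ∀ i ≤ l, Z n i ω = w i}) atTop
      (𝓝 (P.real {ω | ∀ i ≤ l, Y i ω = w i})) := by
    intro l w
    refine (ENNReal.tendsto_toReal (measure_ne_top _ _)).comp ?_
    refine tendsto_measure_of_ae_tendsto_indicator_of_isFiniteMeasure atTop (meas_cyl hYm l w)
      (fun n => meas_cyl (hZm n) l w) ?_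
    filter_upwards [hae] with ω hω
    have : ∀ᶠ n in atTop, ∀ i ∈ Finset.range (l + 1), Z n i ω = Y i ω :=
      (Finset.eventually_all _).2 fun i _ => hω i
    filter_upwards [this] with n hn
    refine forall₂_congr fun i hi => ?_
    rw [hn i (by simp; omega)]
  have hstep : ∀ n l (w : ℕ → ℕ), P.real {ω | ∀ i ≤ l + 1, Z n i ω = w i} =
      P.real {ω | ∀ i ≤ l, Z n i ω = w i} * Kn n.succPNat (w l) (w (l + 1)) := by
    intro n l w
    have := chain_step (hν n.succPNat).1 (hKn n.succPNat).1.1 (hchain n.succPNat) l w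
    simp only [Measure.real, Z]
    rw [this, ENNReal.toReal_mul, ENNReal.toReal_ofReal ((hKn n.succPNat).1.1 _ _)]
  let ρ : ℕ → (ℕ → ℕ) → ℝ := fun l w => P.real {ω | ∀ i ≤ l, Y i ω = w i}
  let θ : ℕ → (ℕ → ℕ) → ℕ → ℝ := fun l w b =>
    P.real ({ω | ∀ i ≤ l, Y i ω = w i} ∩ {ω | Y (l + 1) ω = b})
  have hθ : ∀ l w b, θ l w b = ρ (l + 1) (Function.update w (l + 1) b) := by
    intro l w b
    simp only [θ, ρ]
    rw [set_succ Y]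
    congr 2
    · ext ω
      refine forall₂_congr fun i hi => ?_
      rw [Function.update_of_ne (by omega)]
    · simp
  have hK1 : ∀ l w b, ρ l w ≠ 0 →
      Tendsto (fun n : ℕ => Kn n.succPNat (w l) b) atTop (𝓝 (θ l w b / ρ l w)) := by
    intro l w b hρ
    rw [hθ]
    refine ((hlim (l + 1) (Function.update w (l + 1) b)).div (hlim l w) hρ).congr' ?_
    filter_upwards [(hlim l w).eventually_ne hρ] with n hn
    rw [Pi.div_apply, hstep, Function.update_self, Function.update_of_ne (by omega)]
    have : {ω | ∀ i ≤ l, Z n i ω = Function.update w (l + 1) b i} =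
        {ω | ∀ i ≤ l, Z n i ω = w i} := by
      ext ω
      refine forall₂_congr fun i hi => ?_
      rw [Function.update_of_ne (by omega)]
    rw [this]
    field_simp
  have hex : ∀ a b : ℕ, ∃ k : ℝ, (∀ l w, w l = a → ρ l w ≠ 0 → k = θ l w b / ρ l w) ∧
      ((∀ l w, w l = a → ρ l w = 0) → k = if b = a then 1 else 0) := by
    intro a b
    by_cases h : ∃ l w, w l = a ∧ ρ l w ≠ 0
    · obtain ⟨l, w, hw, hρ⟩ := h
      refine ⟨θ l w b / ρ l w, fun l' w' hw' hρ' => ?_, fun h => absurd (h l w hw) hρ⟩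
      have h1 := hK1 l w b hρ
      have h2 := hK1 l' w' b hρ'
      rw [hw] at h1
      rw [hw'] at h2
      exact tendsto_nhds_unique h1 h2
    · push Not at h
      exact ⟨_, fun l w hw hρ => absurd (h l w hw) hρ, fun _ => rfl⟩
  choose K hKa hKb using hex
  have hcase : ∀ a, (∃ l w, w l = a ∧ ρ l w ≠ 0) ∨ (∀ l w, w l = a → ρ l w = 0) := by
    intro a
    by_cases h : ∃ l w, w l = a ∧ ρ l w ≠ 0
    · exact Or.inl h
    · push Not at h
      exact Or.inr h
  refine ⟨Y, _, K, init_probVec (P := P) (hYm 0), ⟨⟨fun a b => ?_, fun a => ?_⟩, ?_⟩,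
    chain_of_step hYm fun l a => ?_, hfin⟩
  · rcases hcase a with ⟨l, w, hw, hρ⟩ | h
    · rw [hKa a b l w hw hρ]
      exact div_nonneg measureReal_nonneg measureReal_nonneg
    · rw [hKb a b h]; split_ifs <;> norm_num
  · rcases hcase a with ⟨l, w, hw, hρ⟩ | h
    · have : K a = fun b => θ l w b / ρ l w := funext fun b => hKa a b l w hw hρ
      rw [this, ← div_self hρ]
      exact (step_sum (hYm (l + 1)) (meas_cyl hYm l w)).div_const _
    · have : K a = fun b => if b = a then 1 else 0 := funext fun b => hKb a b h
      rw [this]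
      exact hasSum_ite_eq a 1
  · rcases hcase 0 with ⟨l, w, hw, hρ⟩ | h
    · have h1 := hK1 l w 0 hρ
      rw [← hKa 0 0 l w hw hρ, hw] at h1
      have h2 : (fun n : ℕ => Kn n.succPNat 0 0) = fun _ => (1 : ℝ) :=
        funext fun n => (hKn n.succPNat).2 0 (by simp)
      rw [h2] at h1
      exact tendsto_nhds_unique h1 tendsto_const_nhds
    · rw [hKb 0 0 h]; simp
  · by_cases hρ : ρ l a = 0
    · have : ρ (l + 1) a ≤ ρ l a :=
        measureReal_mono (fun ω hω i hi => hω i (by omega)) (measure_ne_top _ _)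
      have h3 : (0 : ℝ) ≤ ρ (l + 1) a := measureReal_nonneg
      change ρ (l + 1) a = ρ l a * _
      rw [hρ] at this ⊢
      linarith
    · rw [hKa (a l) (a (l + 1)) l a rfl hρ, set_succ Y]
      change θ l a (a (l + 1)) = ρ l a * _
      field_simp

/-- If X is a Markov chain in ℕ with cemetery 0, then ι(X) = (P_N(X))_N is a virtual
Markov chain; conversely, a virtual Markov chain X with ℙ(X ∈ ι(𝒞)) = 1 is of the form
ι(X) (a.s.) for some Markov chain X in ℕ with cemetery 0 on the same probability space. -/
theorem mc_iff_vmc_in_iota {Ω : Type*} [MeasurableSpace Ω] (P : Measure Ω) :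
    (∀ (X : ℕ → Ω → ℕ) (ν : ℕ → ℝ) (K : ℕ → ℕ → ℝ),
      IsProbVec ν → MemK K → IsMarkovChain P X ν K →
      IsVMC P fun ω (N : ℕ+) (i : ℕ) => proj N (fun j => X j ω) i) ∧
    (∀ X : Ω → ℕ+ → ℕ → ℕ, IsVMC P X →
      (∀ᵐ ω ∂P, ∃ y ∈ PathSpace, X ω = fun (N : ℕ+) (i : ℕ) => proj N y i) →
      ∃ (Y : ℕ → Ω → ℕ) (ν : ℕ → ℝ) (K : ℕ → ℕ → ℝ),
        IsProbVec ν ∧ MemK K ∧ IsMarkovChain P Y ν K ∧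
        ∀ᵐ ω ∂P, X ω = fun (N : ℕ+) (i : ℕ) => proj N (fun j => Y j ω) i) := by
  exact ⟨fun X ν K hν hK hX => forward hν hK hX, fun X hX hι => backward X hX hι⟩
end

section
/- Let X = (X_N)_{N∈ℕ} be a virtual Markov chain on a probability space (Ω,𝔉,ℙ), and for each N let ν_N = ℙ ∘ X_N(0)^{-1} be the law of X_N(0). Then ν = (ν_N)_{N∈ℕ} is a virtual distribution (ν ∈ 𝓓₁), and there exists a virtual transition matrix K = (K_N)_{N∈ℕ} ∈ 𝓚 such that, for every N ∈ ℕ, X_N is a Markov chain with initial distribution ν_N and transition matrix K_N, and the pair (ν, K) is compatible. -/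
open MeasureTheory

/-- The projection P_N : 𝒦_{N+1} → 𝒦_N on transition matrices. -/
noncomputable def projK (N : ℕ) (K : ℕ → ℕ → ℝ) : ℕ → ℕ → ℝ := fun a b =>
  if 1 ≤ a ∧ a ≤ N then
    (if b ≤ N then
      (if K (N + 1) (N + 1) < 1 then
        K a b + K a (N + 1) * K (N + 1) b / (1 - K (N + 1) (N + 1))
      else if b = 0 then K a 0 + K a (N + 1)
      else K a b)
    else 0)
  else if a = b then 1 else 0

/-- Membership in the space 𝓚 of virtual transition matrices. -/
def MemVTM (K : ℕ+ → ℕ → ℕ → ℝ) : Prop :=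
  (∀ N : ℕ+, MemKN N (K N)) ∧ ∀ N : ℕ+, projK N (K (N + 1)) = K N

/-- The constants C^K_{N,a} (with `C^K_{0,0} = 0` by convention). -/
noncomputable def Ccoef (K : ℕ+ → ℕ → ℕ → ℝ) (N a : ℕ) : ℝ :=
  if N = 0 then 0
  else if K N.succPNat (N + 1) (N + 1) < 1 then
    K N.succPNat (N + 1) a / (1 - K N.succPNat (N + 1) (N + 1))
  else if a = 0 then 1 else 0

/-- Compatibility of a virtual distribution with a virtual transition matrix:
ν_N(a) = ν_{N+1}(a) + ν_{N+1}(N+1)·C^K_{N,a}. -/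
def Compatible (ν : ℕ+ → ℕ → ℝ) (K : ℕ+ → ℕ → ℕ → ℝ) : Prop :=
  ∀ (N : ℕ+) (a : ℕ), a ≤ (N : ℕ) →
    ν N a = ν (N + 1) a + ν (N + 1) ((N : ℕ) + 1) * Ccoef K (N : ℕ) a

/-- Membership in the space 𝓓₁ of virtual distributions. -/
def MemD1 (ν : ℕ+ → ℕ → ℝ) : Prop :=
  (∀ (N : ℕ+) (a : ℕ), 0 ≤ ν N a) ∧
  (∀ N : ℕ+, ∑ a ∈ Finset.range ((N : ℕ) + 1), ν N a = 1) ∧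
  (∀ (N : ℕ+) (a : ℕ), (N : ℕ) < a → ν N a = 0) ∧
  (∀ (N : ℕ+) (a : ℕ), a ≤ (N : ℕ) → ν (N + 1) a ≤ ν N a)

section Helpers

open Set

lemma exists_count_eq (p : ℕ → Prop) [DecidablePred p] (j n : ℕ) (h : j < Nat.count p n) :
    ∃ m < n, p m ∧ Nat.count p m = j := by
  induction n with
  | zero => simp at h
  | succ n ih =>
    by_cases hj : j < Nat.count p n
    · obtain ⟨m, hm, h1, h2⟩ := ih hj
      exact ⟨m, by omega, h1, h2⟩
    · rw [Nat.count_succ] at h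
      by_cases hp : p n
      · simp only [hp, if_true] at h
        exact ⟨n, by omega, hp, by omega⟩
      · simp only [hp, if_false] at h
        omega

lemma hitIdx_eq_iff (x : ℕ → ℕ) (N : ℕ) (j : ℕ) : ∀ n : ℕ,
    hitIdx x N j = (n : ℕ∞) ↔ x n ≤ N ∧ Nat.count (fun i => x i ≤ N) n = j := by
  induction j with
  | zero =>
    intro n
    rw [hitIdx, Nat.count_iff_forall_not]
    constructor
    · intro h
      have hne : ({e : ℕ∞ | ∃ i : ℕ, e = (i : ℕ∞) ∧ x i ≤ N}).Nonempty := by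
        by_contra hc
        rw [Set.not_nonempty_iff_eq_empty] at hc
        rw [hc, sInf_empty] at h
        exact absurd h.symm (ENat.natCast_ne_top n)
      have hm := csInf_mem hne
      rw [h] at hm
      obtain ⟨i, hi, hx⟩ := hm
      have : n = i := by exact_mod_cast hi
      subst this
      refine ⟨hx, fun m hmn hxm => ?_⟩
      have : (n : ℕ∞) ≤ m := by
        rw [← h]
        exact sInf_le ⟨m, rfl, hxm⟩
      have : n ≤ m := by exact_mod_cast this
      omega
    · rintro ⟨h1, h2⟩
      refine IsLeast.csInf_eq ⟨⟨n, rfl, h1⟩, ?_⟩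
      rintro e ⟨i, rfl, hi⟩
      have : n ≤ i := by
        by_contra hc
        exact h2 i (by omega) hi
      exact_mod_cast this
  | succ j ih =>
    intro n
    rw [hitIdx]
    constructor
    · intro h
      have hne : ({e : ℕ∞ | ∃ i : ℕ, e = (i : ℕ∞) ∧ hitIdx x N j < (i : ℕ∞) ∧ x i ≤ N}).Nonempty := by
        by_contra hc
        rw [Set.not_nonempty_iff_eq_empty] at hc
        rw [hc, sInf_empty] at h
        exact absurd h.symm (ENat.natCast_ne_top n)
      have hm := csInf_mem hne
      rw [h] at hm
      obtain ⟨i, hi, hlt, hx⟩ := hm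
      have : n = i := by exact_mod_cast hi
      subst this
      obtain ⟨m, hm⟩ := ENat.ne_top_iff_exists.mp (ne_top_of_lt hlt)
      have hm' := (ih m).mp hm.symm
      rw [← hm] at hlt
      have hmn : m < n := by exact_mod_cast hlt
      refine ⟨hx, ?_⟩
      have h1 := Nat.count_strict_mono (p := fun i => x i ≤ N) hm'.1 hmn
      by_contra hc
      obtain ⟨m', hm'n, hp', hc'⟩ := exists_count_eq (fun i => x i ≤ N) (j + 1) n (by omega)
      have hmm : m < m' := Nat.lt_of_count_lt_count (p := fun i => x i ≤ N) (by omega)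
      have : (n : ℕ∞) ≤ m' := by
        rw [← h]
        refine sInf_le ⟨m', rfl, ?_, hp'⟩
        rw [← hm]
        exact_mod_cast hmm
      have : n ≤ m' := by exact_mod_cast this
      omega
    · rintro ⟨h1, h2⟩
      obtain ⟨m, hmn, hp, hc⟩ := exists_count_eq (fun i => x i ≤ N) j n (by omega)
      have hm := (ih m).mpr ⟨hp, hc⟩
      rw [hm]
      refine IsLeast.csInf_eq ⟨⟨n, rfl, by exact_mod_cast hmn, h1⟩, ?_⟩
      rintro e ⟨i, rfl, hlt, hi⟩
      have hmi : m < i := by exact_mod_cast hlt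
      have h3 := Nat.count_strict_mono (p := fun i => x i ≤ N) hp hmi
      have : n ≤ i := by
        by_contra hcc
        have := Nat.count_strict_mono (p := fun i => x i ≤ N) hi (show i < n by omega)
        omega
      exact_mod_cast this

lemma proj_of_count (x : ℕ → ℕ) (N j n : ℕ) (h1 : x n ≤ N)
    (h2 : Nat.count (fun i => x i ≤ N) n = j) : proj N x j = x n := by
  have := (hitIdx_eq_iff x N j n).mpr ⟨h1, h2⟩
  simp [proj, this]

lemma exists_of_proj (x : ℕ → ℕ) (N j : ℕ) (h : proj N x j ≠ 0) :
    ∃ n, x n = proj N x j ∧ x n ≤ N ∧ Nat.count (fun i => x i ≤ N) n = j := by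
  have hne : hitIdx x N j ≠ ⊤ := by
    intro hc
    exact h (by simp [proj, hc])
  obtain ⟨m, hm⟩ := ENat.ne_top_iff_exists.mp hne
  have := (hitIdx_eq_iff x N j m).mp hm.symm
  exact ⟨m, (proj_of_count x N j m this.1 this.2).symm, this⟩

variable {Ω : Type*} [MeasurableSpace Ω]

lemma iUnion_inter_mul {ι : Type*} [Countable ι] (P : Measure Ω) (F : ι → Set Ω) (B : Set Ω)
    (r : ENNReal) (hd : Pairwise (Function.onFun Disjoint F)) (hF : ∀ i, MeasurableSet (F i))
    (hB : MeasurableSet B) (h : ∀ i, P (F i ∩ B) = P (F i) * r) :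
    P ((⋃ i, F i) ∩ B) = P (⋃ i, F i) * r := by
  rw [iUnion_inter, measure_iUnion _ (fun i => (hF i).inter hB), measure_iUnion hd hF,
    ← ENNReal.tsum_mul_right]
  · exact tsum_congr h
  · intro i k hik
    exact (hd hik).mono inter_subset_left inter_subset_left

/-- `F` is determined by the first coordinates `Y 0, …, Y n`. -/
def Pre (Y : ℕ → Ω → ℕ) (n : ℕ) (F : Set Ω) : Prop :=
  ∀ ω ω', (∀ i ≤ n, Y i ω = Y i ω') → ω ∈ F → ω' ∈ F

lemma measurable_prefix {Y : ℕ → Ω → ℕ} (hY : ∀ i, Measurable (Y i)) (l : ℕ) (a : ℕ → ℕ) :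
    MeasurableSet {ω | ∀ i ≤ l, Y i ω = a i} := by
  have : {ω | ∀ i ≤ l, Y i ω = a i} = ⋂ i : ℕ, ⋂ _ : i ≤ l, Y i ⁻¹' {a i} := by
    ext; simp
  rw [this]
  exact MeasurableSet.iInter fun i => MeasurableSet.iInter fun _ => hY i (measurableSet_singleton _)

lemma Pre.decomp {Y : ℕ → Ω → ℕ} {n : ℕ} {F : Set Ω} (h : Pre Y n F) :
    ∃ (T : Set (Fin (n + 1) → ℕ)) (w : T → Ω), (∀ s, w s ∈ F) ∧
      (F = ⋃ s, {ω | ∀ i ≤ n, Y i ω = Y i (w s)}) ∧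
      Pairwise (Function.onFun Disjoint fun s => {ω | ∀ i ≤ n, Y i ω = Y i (w s)}) := by
  let f : Ω → (Fin (n + 1) → ℕ) := fun ω i => Y i ω
  have hex : ∀ s : f '' F, ∃ ω ∈ F, f ω = s := fun s => s.2
  choose w hw1 hw2 using hex
  refine ⟨f '' F, w, hw1, ?_, ?_⟩
  · ext ω
    simp only [mem_iUnion, mem_ofPred_eq]
    constructor
    · intro hω
      refine ⟨⟨f ω, ω, hω, rfl⟩, fun i hi => ?_⟩
      have := congrFun (hw2 ⟨f ω, ω, hω, rfl⟩) ⟨i, by omega⟩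
      exact this.symm
    · rintro ⟨s, hs⟩
      exact h (w s) ω (fun i hi => (hs i hi).symm) (hw1 s)
  · intro s t hst
    rw [Function.onFun, Set.disjoint_left]
    intro ω h1 h2
    apply hst
    apply Subtype.ext
    rw [← hw2 s, ← hw2 t]
    funext i
    have hi : (i : ℕ) ≤ n := by omega
    exact (h1 i hi).symm.trans (h2 i hi)

lemma Pre.measurableSet {Y : ℕ → Ω → ℕ} (hY : ∀ i, Measurable (Y i)) {n : ℕ} {F : Set Ω}
    (h : Pre Y n F) : MeasurableSet F := by
  obtain ⟨T, w, -, h1, -⟩ := h.decomp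
  rw [h1]
  exact MeasurableSet.iUnion fun s => measurable_prefix hY n _

lemma markov_step {P : Measure Ω} [IsProbabilityMeasure P] {Y : ℕ → Ω → ℕ} {ν : ℕ → ℝ}
    {K : ℕ → ℕ → ℝ} (hM : IsMarkovChain P Y ν K) (hν : ∀ a, 0 ≤ ν a) (hK : ∀ a b, 0 ≤ K a b)
    {n : ℕ} {F : Set Ω} (hF : Pre Y n F) (a b : ℕ) (ha : ∀ ω ∈ F, Y n ω = a) :
    P.real (F ∩ {ω | Y (n + 1) ω = b}) = P.real F * K a b := by
  obtain ⟨T, w, hw, h1, hd⟩ := hF.decomp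
  have key : P (F ∩ {ω | Y (n + 1) ω = b}) = P F * ENNReal.ofReal (K a b) := by
    rw [h1]
    refine iUnion_inter_mul P _ _ _ hd (fun s => measurable_prefix hM.1 n _)
      (hM.1 (n + 1) (measurableSet_singleton b)) (fun s => ?_)
    have e : {ω | ∀ i ≤ n, Y i ω = Y i (w s)} ∩ {ω | Y (n + 1) ω = b}
        = {ω | ∀ i ≤ n + 1, Y i ω = (fun i => if i ≤ n then Y i (w s) else b) i} := by
      ext ω
      simp only [mem_inter_iff, mem_ofPred_eq]
      constructor
      · rintro ⟨h2, h3⟩ i hi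
        by_cases hin : i ≤ n
        · simp [hin, h2 i hin]
        · have : i = n + 1 := by omega
          subst this
          simp [h3]
      · intro h2
        refine ⟨fun i hi => ?_, ?_⟩
        · have := h2 i (by omega)
          simpa [hi] using this
        · have := h2 (n + 1) le_rfl
          simpa using this
    rw [e, hM.2, hM.2, ← ENNReal.ofReal_mul
      (mul_nonneg (hν _) (Finset.prod_nonneg fun _ _ => hK _ _)),
      Finset.prod_Icc_succ_top (by omega)]
    congr 1
    have hp : ∏ k ∈ Finset.Icc 1 n, K (if k - 1 ≤ n then Y (k - 1) (w s) else b)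
        (if k ≤ n then Y k (w s) else b) = ∏ k ∈ Finset.Icc 1 n, K (Y (k - 1) (w s)) (Y k (w s)) := by
      refine Finset.prod_congr rfl fun k hk => ?_
      rw [Finset.mem_Icc] at hk
      rw [if_pos (by omega), if_pos hk.2]
    simp only [hp]
    simp [ha _ (hw s), mul_assoc]
  rw [measureReal_def, key, ENNReal.toReal_mul, ENNReal.toReal_ofReal (hK a b), measureReal_def]

/-- The coefficient attached to the row `ρ` of the state `M`. -/
noncomputable def coefC (ρ : ℕ → ℝ) (M b : ℕ) : ℝ :=
  if ρ M < 1 then ρ b / (1 - ρ M) else if b = 0 then 1 else 0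

lemma coefC_nonneg {ρ : ℕ → ℝ} (h : ∀ b, 0 ≤ ρ b) (M b : ℕ) : 0 ≤ coefC ρ M b := by
  unfold coefC
  split_ifs with h1 h2
  · exact div_nonneg (h b) (by linarith)
  · norm_num
  · norm_num

lemma coefC_sum {ρ : ℕ → ℝ} {M : ℕ} (hM : 0 < M)
    (hs : ∑ b ∈ Finset.range (M + 1), ρ b = 1) : ∑ b ∈ Finset.range M, coefC ρ M b = 1 := by
  unfold coefC
  rw [Finset.sum_range_succ] at hs
  by_cases h1 : ρ M < 1
  · simp only [h1, if_true]
    rw [← Finset.sum_div, div_eq_one_iff_eq (by linarith)]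
    linarith
  · simp [h1, hM.ne']

lemma first_exit (P : Measure Ω) [IsProbabilityMeasure P] (M : ℕ) (hM : 0 < M)
    (Z : ℕ → Ω → ℕ) (hZ : ∀ i, Measurable (Z i)) (W : Ω → ℕ) (hW : Measurable W) (F : Set Ω)
    (hF : MeasurableSet F) (π ρ : ℕ → ℝ) (hπ : ∀ b, 0 ≤ π b) (hρ : ∀ b, 0 ≤ ρ b)
    (sπ : ∑ b ∈ Finset.range (M + 1), π b = 1) (sρ : ∑ b ∈ Finset.range (M + 1), ρ b = 1)
    (h0 : ∀ b, P.real (F ∩ {ω | Z 0 ω = b}) = P.real F * π b)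
    (hs : ∀ k b, P.real ((F ∩ {ω | ∀ i ≤ k, Z i ω = M}) ∩ {ω | Z (k + 1) ω = b})
      = P.real (F ∩ {ω | ∀ i ≤ k, Z i ω = M}) * ρ b)
    (w1 : ∀ᵐ ω ∂P, ω ∈ F → ∀ k, (∀ i < k, Z i ω = M) → Z k ω < M → W ω = Z k ω)
    (w2 : ∀ᵐ ω ∂P, ω ∈ F → (∀ i, Z i ω = M) → W ω = 0) (b : ℕ) (hb : b < M) :
    P.real (F ∩ {ω | W ω = b}) = P.real F * (π b + π M * coefC ρ M b) := by
  set p := P.real F with hp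
  have hp0 : 0 ≤ p := measureReal_nonneg
  -- the events
  let D : ℕ → Set Ω := fun k => F ∩ {ω | ∀ i ≤ k, Z i ω = M}
  have hDm : ∀ k, MeasurableSet (D k) := fun k => hF.inter (measurable_prefix hZ k fun _ => M)
  have hD : ∀ k, P.real (D k) = p * π M * ρ M ^ k := by
    intro k
    induction k with
    | zero =>
      have : D 0 = F ∩ {ω | Z 0 ω = M} := by
        ext ω; simp [D]
      rw [this, h0]; simp
    | succ k ih =>
      have : D (k + 1) = D k ∩ {ω | Z (k + 1) ω = M} := by
        ext ω
        simp only [D, mem_inter_iff, mem_ofPred_eq, and_assoc]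
        refine and_congr_right fun _ => ?_
        constructor
        · intro h
          exact ⟨fun i hi => h i (by omega), h _ le_rfl⟩
        · rintro ⟨h1, h2⟩ i hi
          rcases Nat.lt_or_ge k i with h | h
          · have : i = k + 1 := by omega
            subst this; exact h2
          · exact h1 i h
      rw [this]
      have := hs k M
      change P.real (D k ∩ _) = P.real (D k) * _ at this
      rw [this, ih, pow_succ]; ring
  let E : ℕ → ℕ → Set Ω := fun c k => F ∩ {ω | (∀ i < k, Z i ω = M) ∧ Z k ω = c}
  have hE0 : ∀ c, E c 0 = F ∩ {ω | Z 0 ω = c} := by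
    intro c; ext ω; simp [E]
  have hE1 : ∀ c k, E c (k + 1) = D k ∩ {ω | Z (k + 1) ω = c} := by
    intro c k; ext ω; simp [E, D, and_assoc]
  have hEm : ∀ c k, MeasurableSet (E c k) := by
    intro c k
    cases k with
    | zero => rw [hE0]; exact hF.inter (hZ 0 (measurableSet_singleton c))
    | succ k => rw [hE1]; exact (hDm k).inter (hZ (k + 1) (measurableSet_singleton c))
  have hEP : ∀ c k, P.real (E c (k + 1)) = p * π M * ρ M ^ k * ρ c := by
    intro c k
    rw [hE1, ← hD]
    exact hs k c
  have hEd : ∀ c < M, ∀ k l, k < l → Disjoint (E c k) (E c l) := by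
    intro c hc k l hkl
    rw [Set.disjoint_left]
    rintro ω ⟨-, -, h1⟩ ⟨-, h2, -⟩
    have := h2 k hkl
    omega
  have hEW : ∀ c < M, ∀ n, ∑ k ∈ Finset.range n, P.real (E c k) ≤ P.real (F ∩ {ω | W ω = c}) := by
    intro c hc n
    rw [← measureReal_biUnion_finset _ (fun k _ => hEm c k)]
    · apply ENNReal.toReal_mono (measure_ne_top _ _)
      apply measure_mono_ae
      filter_upwards [w1] with ω hω hmem
      have hmem' : ω ∈ ⋃ k ∈ Finset.range n, E c k := hmem
      simp only [mem_iUnion] at hmem'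
      obtain ⟨k, -, h1, h2, h3⟩ := hmem'
      refine ⟨h1, ?_⟩
      have := hω h1 k h2 (by omega)
      exact this.trans h3
    · intro k _ l _ hkl
      rcases lt_or_gt_of_ne hkl with h | h
      · exact hEd c hc k l h
      · exact (hEd c hc l k h).symm
  have lower : ∀ c ∈ Finset.range M, p * (π c + π M * coefC ρ M c) ≤ P.real (F ∩ {ω | W ω = c}) := by
    intro c hc
    rw [Finset.mem_range] at hc
    by_cases h1 : ρ M < 1
    · have hc1 : coefC ρ M c = ρ c * (1 - ρ M)⁻¹ := by simp [coefC, h1, div_eq_mul_inv]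
      have hg := ((hasSum_geometric_of_lt_one (hρ M) h1).mul_left (p * π M * ρ c)).tendsto_sum_nat
      have hg2 := hg.const_add (p * π c)
      have : p * (π c + π M * coefC ρ M c) = p * π c + p * π M * ρ c * (1 - ρ M)⁻¹ := by
        rw [hc1]; ring
      rw [this]
      refine le_of_tendsto' hg2 fun n => ?_
      refine le_trans (le_of_eq ?_) (hEW c hc (n + 1))
      rw [Finset.sum_range_succ', hE0, h0, add_comm]
      congr 1
      refine Finset.sum_congr rfl fun k _ => ?_
      rw [hEP]; ring
    · by_cases hc0 : c = 0
      · have hc1 : coefC ρ M c = 1 := by simp [coefC, h1, hc0]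
        have hρ1 : ρ M = 1 := by
          refine le_antisymm ?_ (not_lt.mp h1)
          rw [← sρ]
          exact Finset.single_le_sum (f := ρ) (fun i _ => hρ i) (by simp)
        rw [hc1, mul_one]
        have hDa : Antitone D := by
          intro k l hkl ω hω
          exact ⟨hω.1, fun i hi => hω.2 i (hi.trans hkl)⟩
        have hI : P.real (⋂ k, D k) = p * π M := by
          have ht := tendsto_measure_iInter_atTop (μ := P) (fun k => (hDm k).nullMeasurableSet) hDa
            ⟨0, measure_ne_top _ _⟩
          have ht2 := (ENNReal.tendsto_toReal (measure_ne_top _ _)).comp ht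
          refine tendsto_nhds_unique ht2 ?_
          refine tendsto_const_nhds.congr fun k => ?_
          have := hD k
          rw [hρ1, one_pow, mul_one] at this
          exact this.symm
        have hdis : Disjoint (E c 0) (⋂ k, D k) := by
          rw [Set.disjoint_left]
          rintro ω ⟨-, -, h3⟩ h4
          have := (mem_iInter.mp h4 0).2 0 le_rfl
          omega
        have : p * (π c + π M) = P.real (E c 0 ∪ ⋂ k, D k) := by
          rw [measureReal_union hdis (MeasurableSet.iInter hDm), hI, hE0, h0]; ring
        rw [this]
        apply ENNReal.toReal_mono (measure_ne_top _ _)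
        apply measure_mono_ae
        filter_upwards [w1, w2] with ω hω hω2 hmem
        rcases hmem with ⟨h1, h2, h3⟩ | h4
        · exact ⟨h1, (hω h1 0 h2 (by omega)).trans h3⟩
        · have h5 := mem_iInter.mp h4
          refine ⟨(h5 0).1, ?_⟩
          have := hω2 (h5 0).1 (fun i => (h5 i).2 i le_rfl)
          exact this.trans hc0.symm
      · have hc1 : coefC ρ M c = 0 := by simp [coefC, h1, hc0]
        have := hEW c hc 1
        rw [Finset.sum_range_one, hE0, h0] at this
        rw [hc1]; simpa using this
  have upper : ∑ c ∈ Finset.range M, P.real (F ∩ {ω | W ω = c}) ≤ p := by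
    have hm : ∀ c ∈ Finset.range M, MeasurableSet (F ∩ {ω | W ω = c}) :=
      fun c _ => hF.inter (hW (measurableSet_singleton c))
    rw [← measureReal_biUnion_finset _ hm]
    · refine measureReal_mono ?_ (measure_ne_top _ _)
      intro ω hω
      simp only [mem_iUnion] at hω
      obtain ⟨c, -, h1, -⟩ := hω
      exact h1
    · intro c _ d _ hcd
      rw [Function.onFun, Set.disjoint_left]
      rintro ω ⟨-, h1⟩ ⟨-, h2⟩
      exact hcd (h1.symm.trans h2)
  have tot : ∑ c ∈ Finset.range M, p * (π c + π M * coefC ρ M c) = p := by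
    rw [← Finset.mul_sum, Finset.sum_add_distrib, ← Finset.mul_sum, coefC_sum hM sρ]
    rw [Finset.sum_range_succ] at sπ
    rw [mul_one, sπ, mul_one]
  have heq := (Finset.sum_eq_sum_iff_of_le lower).mp
    (le_antisymm (Finset.sum_le_sum lower) (by rw [tot]; exact upper))
  exact (heq b (Finset.mem_range.mpr hb)).symm

lemma proj_init {P : Measure Ω} [IsProbabilityMeasure P] {Y : ℕ → Ω → ℕ} {ν : ℕ → ℝ}
    {K : ℕ → ℕ → ℝ} (hM : IsMarkovChain P Y ν K) (hν : ∀ a, 0 ≤ ν a) (hK : ∀ a b, 0 ≤ K a b)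
    (N : ℕ) (sν : ∑ b ∈ Finset.range (N + 1 + 1), ν b = 1)
    (sK : ∀ a, 1 ≤ a → a ≤ N + 1 → ∑ b ∈ Finset.range (N + 1 + 1), K a b = 1)
    (U : ℕ → Ω → ℕ) (hU : ∀ i, Measurable (U i))
    (hproj : ∀ᵐ ω ∂P, ∀ j, U j ω = proj N (fun i => Y i ω) j) (b : ℕ) (hb : b ≤ N) :
    P.real {ω | U 0 ω = b} = ν b + ν (N + 1) * coefC (K (N + 1)) (N + 1) b := by
  have := first_exit P (N + 1) (by omega) Y hM.1 (U 0) (hU 0) univ MeasurableSet.univ ν (K (N + 1))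
    hν (hK _) sν (sK _ (by omega) le_rfl) ?_ ?_ ?_ ?_ b (by omega)
  · simpa using this
  · intro c
    have h := hM.2 0 (fun _ => c)
    simp only [Nat.le_zero, forall_eq] at h
    simp only [univ_inter, measureReal_def, h]
    simp [hν c]
  · intro k c
    refine markov_step hM hν hK ?_ _ _ (fun ω hω => hω.2 k le_rfl)
    intro ω ω' h h2
    exact ⟨trivial, fun i hi => (h i hi).symm.trans (h2.2 i hi)⟩
  · filter_upwards [hproj] with ω hω _ k hk hlt
    rw [hω]
    refine proj_of_count _ _ _ _ (by omega) ?_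
    rw [Nat.count_iff_forall_not]
    intro m hm
    have := hk m hm
    omega
  · filter_upwards [hproj] with ω hω _ hk
    rw [hω]
    by_contra hc
    obtain ⟨n, -, h2, -⟩ := exists_of_proj _ _ _ hc
    have := hk n
    omega

lemma proj_step {P : Measure Ω} [IsProbabilityMeasure P] {Y : ℕ → Ω → ℕ} {ν : ℕ → ℝ}
    {K : ℕ → ℕ → ℝ} (hM : IsMarkovChain P Y ν K) (hν : ∀ a, 0 ≤ ν a) (hK : ∀ a b, 0 ≤ K a b)
    (N : ℕ)
    (sK : ∀ a, 1 ≤ a → a ≤ N + 1 → ∑ b ∈ Finset.range (N + 1 + 1), K a b = 1)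
    (U : ℕ → Ω → ℕ) (hU : ∀ i, Measurable (U i))
    (hproj : ∀ᵐ ω ∂P, ∀ j, U j ω = proj N (fun i => Y i ω) j) (j a b : ℕ)
    (ha1 : 1 ≤ a) (ha : a ≤ N) (hb : b ≤ N) :
    P.real ({ω | U j ω = a} ∩ {ω | U (j + 1) ω = b}) =
      P.real {ω | U j ω = a} * (K a b + K a (N + 1) * coefC (K (N + 1)) (N + 1) b) := by
  set q := K a b + K a (N + 1) * coefC (K (N + 1)) (N + 1) b with hq
  have hq0 : 0 ≤ q := add_nonneg (hK _ _) (mul_nonneg (hK _ _) (coefC_nonneg (hK _) _ _))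
  let F : ℕ → Set Ω := fun n => {ω | Y n ω = a ∧ Nat.count (fun i => Y i ω ≤ N) n = j}
  have hFpre : ∀ n, Pre Y n (F n) := by
    intro n ω ω' h hω
    refine ⟨(h n le_rfl).symm.trans hω.1, ?_⟩
    rw [← hω.2, Nat.count_eq_card_filter_range, Nat.count_eq_card_filter_range]
    congr 1
    refine Finset.filter_congr fun i hi => ?_
    rw [Finset.mem_range] at hi
    rw [h i hi.le]
  have hFm : ∀ n, MeasurableSet (F n) := fun n => (hFpre n).measurableSet hM.1
  have hFU : (⋃ n, F n) =ᵐ[P] {ω | U j ω = a} := by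
    rw [Filter.eventuallyEq_set]
    filter_upwards [hproj] with ω hω
    simp only [mem_iUnion, mem_ofPred_eq, F]
    rw [hω]
    constructor
    · rintro ⟨n, h1, h2⟩
      rw [proj_of_count _ _ _ n (by omega) h2, h1]
    · intro h
      obtain ⟨n, h1, -, h3⟩ := exists_of_proj (fun i => Y i ω) N j (by omega)
      exact ⟨n, h1.trans h, h3⟩
  have hd : Pairwise (Function.onFun Disjoint F) := by
    intro m n hmn
    rw [Function.onFun, Set.disjoint_left]
    rintro ω ⟨h1, h2⟩ ⟨h3, h4⟩
    exact hmn (Nat.count_injective (p := fun i => Y i ω ≤ N) (by omega) (by omega) (h2.trans h4.symm))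
  have hone : ∀ n, P.real (F n ∩ {ω | U (j + 1) ω = b}) = P.real (F n) * q := by
    intro n
    refine first_exit P (N + 1) (by omega) (fun k => Y (n + 1 + k)) (fun k => hM.1 _) (U (j + 1))
      (hU _) (F n) (hFm n) (K a) (K (N + 1)) (hK _) (hK _) (sK _ ha1 (by omega))
      (sK _ (by omega) le_rfl) ?_ ?_ ?_ ?_ b (by omega)
    · intro c
      exact markov_step hM hν hK (hFpre n) a c (fun ω hω => hω.1)
    · intro k c
      refine markov_step (n := n + 1 + k) hM hν hK ?_ _ _ (fun ω hω => hω.2 k le_rfl)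
      intro ω ω' h h2
      refine ⟨hFpre n ω ω' (fun i hi => h i (by omega)) h2.1, fun i hi => ?_⟩
      exact (h (n + 1 + i) (by omega)).symm.trans (h2.2 i hi)
    · filter_upwards [hproj] with ω hω hF k hk hlt
      rw [hω]
      refine proj_of_count _ _ _ _ (by omega) ?_
      have h1 : Nat.count (fun i => Y i ω ≤ N) (n + 1) = j + 1 := by
        rw [Nat.count_succ, hF.2, if_pos (by rw [hF.1]; exact ha)]
      rw [Nat.count_add, h1]
      have : Nat.count (fun i => Y (n + 1 + i) ω ≤ N) k = 0 := by
        rw [Nat.count_iff_forall_not]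
        intro m hm
        have := hk m hm
        omega
      omega
    · filter_upwards [hproj] with ω hω hF hk
      rw [hω]
      by_contra hc
      obtain ⟨m, -, h2, h3⟩ := exists_of_proj _ _ _ hc
      have hlt : n < m := Nat.lt_of_count_lt_count (p := fun i => Y i ω ≤ N) (by
        rw [h3, hF.2]; omega)
      have := hk (m - (n + 1))
      rw [show n + 1 + (m - (n + 1)) = m by omega] at this
      omega
  have key := iUnion_inter_mul P F {ω | U (j + 1) ω = b} (ENNReal.ofReal q) hd hFm
    (hU _ (measurableSet_singleton b)) (fun n => by
      have := hone n
      rw [measureReal_def, measureReal_def] at this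
      rw [← ENNReal.ofReal_toReal (measure_ne_top P (F n ∩ _)), this,
        ENNReal.ofReal_mul ENNReal.toReal_nonneg, ENNReal.ofReal_toReal (measure_ne_top _ _)])
  have e2 : ((⋃ n, F n) ∩ {ω | U (j + 1) ω = b} : Set Ω) =ᵐ[P]
      ({ω | U j ω = a} ∩ {ω | U (j + 1) ω = b} : Set Ω) := hFU.inter (ae_eq_refl _)
  rw [measure_congr e2, measure_congr hFU] at key
  rw [measureReal_def, key, ENNReal.toReal_mul, ENNReal.toReal_ofReal hq0, measureReal_def]

lemma markov_prob {P : Measure Ω} {Y : ℕ → Ω → ℕ} {ν : ℕ → ℝ}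
    {K : ℕ → ℕ → ℝ} (hM : IsMarkovChain P Y ν K) (hν : IsProbVec ν) : IsProbabilityMeasure P := by
  have h0 : ∀ c, P {ω | Y 0 ω = c} = ENNReal.ofReal (ν c) := by
    intro c
    have h := hM.2 0 (fun _ => c)
    simpa using h
  constructor
  have : (univ : Set Ω) = ⋃ c, {ω | Y 0 ω = c} := by
    ext ω; simp
  rw [this, measure_iUnion]
  · simp only [h0]
    rw [← ENNReal.ofReal_tsum_of_nonneg hν.1 hν.2.summable, hν.2.tsum_eq, ENNReal.ofReal_one]
  · intro c d hcd
    rw [Function.onFun, Set.disjoint_left]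
    intro ω h1 h2
    exact hcd (h1.symm.trans h2)
  · exact fun c => hM.1 0 (measurableSet_singleton c)

lemma markov_init {P : Measure Ω} {Y : ℕ → Ω → ℕ} {ν : ℕ → ℝ}
    {K : ℕ → ℕ → ℝ} (hM : IsMarkovChain P Y ν K) (hν : ∀ a, 0 ≤ ν a) (c : ℕ) :
    (P {ω | Y 0 ω = c}).toReal = ν c := by
  have h := hM.2 0 (fun _ => c)
  simp only [Nat.le_zero, forall_eq] at h
  rw [h]
  simp [hν c]

lemma sum_range_of_hasSum {f : ℕ → ℝ} (h : HasSum f 1) (N : ℕ) (h0 : ∀ b, N < b → f b = 0) :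
    ∑ b ∈ Finset.range (N + 1), f b = 1 := by
  refine (hasSum_sum_of_ne_finset_zero (s := Finset.range (N + 1)) ?_).unique h
  intro b hb
  rw [Finset.mem_range] at hb
  exact h0 b (by omega)

lemma row_delta {N : ℕ} {K : ℕ → ℕ → ℝ} (h : MemKN N K) (a b : ℕ) (ha : ¬(1 ≤ a ∧ a ≤ N)) :
    K a b = if a = b then 1 else 0 := by
  split_ifs with hab
  · subst hab; exact h.2 a ha
  · have h1 := h.2 a ha
    have h2 := sum_le_hasSum {a, b} (fun i _ => h.1.1 a i) (h.1.2 a)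
    rw [Finset.sum_pair hab] at h2
    have := h.1.1 a b
    linarith

/-- Visited states. -/
def Vis (P : Measure Ω) (Y : ℕ → Ω → ℕ) (a : ℕ) : Prop := P {ω | ∃ j, Y j ω = a} ≠ 0

open Classical in
/-- The corrected transition matrix: unvisited states are sent to the cemetery. -/
noncomputable def modK (P : Measure Ω) (Y : ℕ → Ω → ℕ) (N : ℕ) (K : ℕ → ℕ → ℝ) : ℕ → ℕ → ℝ :=
  fun a b => if (1 ≤ a ∧ a ≤ N) ∧ ¬ Vis P Y a then (if b = 0 then 1 else 0) else K a b

lemma modK_mem {P : Measure Ω} {Y : ℕ → Ω → ℕ} {N : ℕ} {K : ℕ → ℕ → ℝ} (h : MemKN N K) :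
    MemKN N (modK P Y N K) := by
  refine ⟨⟨fun a b => ?_, fun a => ?_⟩, fun a ha => ?_⟩
  · unfold modK
    split_ifs
    · norm_num
    · norm_num
    · exact h.1.1 a b
  · by_cases hc : (1 ≤ a ∧ a ≤ N) ∧ ¬ Vis P Y a
    · have : modK P Y N K a = fun b => if b = 0 then 1 else 0 := by
        funext b; simp only [modK, if_pos hc]
      rw [this]
      exact hasSum_ite_eq 0 1
    · have : modK P Y N K a = K a := by
        funext b; simp only [modK, if_neg hc]
      rw [this]
      exact h.1.2 a
  · have : ¬ ((1 ≤ a ∧ a ≤ N) ∧ ¬ Vis P Y a) := fun hc => ha hc.1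
    simp only [modK, if_neg this]
    exact h.2 a ha

lemma modK_markov {P : Measure Ω} {Y : ℕ → Ω → ℕ} {N : ℕ} {ν : ℕ → ℝ} {K : ℕ → ℕ → ℝ}
    (h : MemKN N K) (hν : ∀ a, 0 ≤ ν a) (hM : IsMarkovChain P Y ν K) :
    IsMarkovChain P Y ν (modK P Y N K) := by
  refine ⟨hM.1, fun l a => ?_⟩
  rw [hM.2]
  congr 1
  induction l with
  | zero => simp
  | succ l ih =>
    rw [Finset.prod_Icc_succ_top (by omega), Finset.prod_Icc_succ_top (by omega), ← mul_assoc,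
      ← mul_assoc, ← ih]
    by_cases hc : (1 ≤ a l ∧ a l ≤ N) ∧ ¬ Vis P Y (a l)
    · have hz : P {ω | ∀ i ≤ l, Y i ω = a i} = 0 := by
        refine measure_mono_null ?_ (not_not.mp hc.2)
        intro ω hω
        exact ⟨l, hω l le_rfl⟩
      rw [hM.2, ENNReal.ofReal_eq_zero] at hz
      have hz' := le_antisymm hz (mul_nonneg (hν _) (Finset.prod_nonneg fun _ _ => h.1.1 _ _))
      rw [hz']; simp
    · have e : l + 1 - 1 = l := rfl
      rw [e]
      simp only [modK, if_neg hc]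

lemma Vis.exists {P : Measure Ω} {Y : ℕ → Ω → ℕ} {a : ℕ} (h : Vis P Y a) :
    ∃ j, P {ω | Y j ω = a} ≠ 0 := by
  by_contra hc
  push Not at hc
  apply h
  have : {ω | ∃ j, Y j ω = a} = ⋃ j, {ω | Y j ω = a} := by ext; simp
  rw [this]
  exact measure_iUnion_null hc

lemma vis_row {P : Measure Ω} [IsProbabilityMeasure P] {Y : ℕ → Ω → ℕ} {ν : ℕ → ℝ}
    {K : ℕ → ℕ → ℝ} (hM : IsMarkovChain P Y ν K) (hν : ∀ a, 0 ≤ ν a) (hK : ∀ a b, 0 ≤ K a b)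
    (j a b : ℕ) :
    P.real ({ω | Y j ω = a} ∩ {ω | Y (j + 1) ω = b}) = P.real {ω | Y j ω = a} * K a b := by
  refine markov_step hM hν hK ?_ a b (fun ω hω => hω)
  intro ω ω' h h2
  exact (h j le_rfl).symm.trans h2

lemma modK_support {P : Measure Ω} [IsProbabilityMeasure P] {Y : ℕ → Ω → ℕ} {N : ℕ} {ν : ℕ → ℝ}
    {K : ℕ → ℕ → ℝ} (h : MemKN N K) (hν : ∀ a, 0 ≤ ν a) (hM : IsMarkovChain P Y ν K)
    (hle : ∀ᵐ ω ∂P, ∀ i, Y i ω ≤ N) (a b : ℕ) (ha : 1 ≤ a ∧ a ≤ N) (hb : N < b) :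
    modK P Y N K a b = 0 := by
  by_cases hv : Vis P Y a
  · simp only [modK, hv, not_true, and_false, if_false]
    obtain ⟨j, hj⟩ := hv.exists
    have h1 := vis_row hM hν h.1.1 j a b
    have h2 : P ({ω | Y j ω = a} ∩ {ω | Y (j + 1) ω = b}) = 0 := by
      refine measure_mono_null inter_subset_right ?_
      have : ∀ᵐ ω ∂P, ¬ (Y (j + 1) ω = b) := by
        filter_upwards [hle] with ω hω
        have := hω (j + 1)
        omega
      simpa [ae_iff] using this
    rw [measureReal_def, h2, ENNReal.toReal_zero] at h1
    have h3 : P.real {ω | Y j ω = a} ≠ 0 := by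
      rw [measureReal_def]
      exact (ENNReal.toReal_pos hj (measure_ne_top _ _)).ne'
    exact (mul_eq_zero.mp h1.symm).resolve_left h3
  · simp only [modK, ha, hv, not_false_iff, and_self, if_true]
    rw [if_neg (by omega)]

end Helpers

/-- A virtual Markov chain has canonical data: the sequence of initial laws
ν_N = ℙ ∘ X_N(0)⁻¹ is a virtual distribution, and there is a virtual transition matrix K
such that each X_N is a Markov chain with data (ν_N, K_N) and (ν, K) is compatible. -/
theorem vmc_canonical_data {Ω : Type*} [MeasurableSpace Ω] (P : Measure Ω)
    (X : Ω → ℕ+ → ℕ → ℕ) (hX : IsVMC P X) :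
    MemD1 (fun (N : ℕ+) (a : ℕ) => (P {ω | X ω N 0 = a}).toReal) ∧
    ∃ K : ℕ+ → ℕ → ℕ → ℝ, MemVTM K ∧
      (∀ N : ℕ+, IsMarkovChain P (fun i ω => X ω N i)
        (fun a => (P {ω | X ω N 0 = a}).toReal) (K N)) ∧
      Compatible (fun (N : ℕ+) (a : ℕ) => (P {ω | X ω N 0 = a}).toReal) K := by
  obtain ⟨hpath, hch⟩ := hX
  choose ν K0 hν hνN hK0 hM0 using hch
  have : IsProbabilityMeasure P := markov_prob (hM0 1) (hν 1)
  have hνeq : (fun (N : ℕ+) (a : ℕ) => (P {ω | X ω N 0 = a}).toReal) = ν := by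
    funext N a
    exact markov_init (hM0 N) (hν N).1 a
  have hνeq' : ∀ N : ℕ+, (fun a => (P {ω | X ω N 0 = a}).toReal) = ν N :=
    fun N => congrFun hνeq N
  rw [hνeq]
  simp only [hνeq']
  let Y : ℕ+ → ℕ → Ω → ℕ := fun N i ω => X ω N i
  let K : ℕ+ → ℕ → ℕ → ℝ := fun N => modK P (Y N) N (K0 N)
  have hKm : ∀ N : ℕ+, MemKN N (K N) := fun N => modK_mem (hK0 N)
  have hM : ∀ N : ℕ+, IsMarkovChain P (Y N) (ν N) (K N) :=
    fun N => modK_markov (hK0 N) (hν N).1 (hM0 N)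
  have hle : ∀ N : ℕ+, ∀ᵐ ω ∂P, ∀ i, Y N i ω ≤ N := by
    intro N
    filter_upwards [hpath] with ω hω
    exact (hω.1 N).2
  have hproj : ∀ N : ℕ+, ∀ᵐ ω ∂P, ∀ j, Y N j ω = proj N (fun i => Y (N + 1) i ω) j := by
    intro N
    filter_upwards [hpath] with ω hω j
    exact (congrFun (hω.2 N) j).symm
  have hsupp : ∀ (N : ℕ+) (a b : ℕ), 1 ≤ a ∧ a ≤ (N : ℕ) → (N : ℕ) < b → K N a b = 0 :=
    fun N a b ha hb => modK_support (hK0 N) (hν N).1 (hM0 N) (hle N) a b ha hb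
  have sK : ∀ (N : ℕ+) (a : ℕ), 1 ≤ a → a ≤ (N : ℕ) + 1 →
      ∑ b ∈ Finset.range ((N : ℕ) + 1 + 1), K (N + 1) a b = 1 := by
    intro N a h1 h2
    refine sum_range_of_hasSum ((hKm (N + 1)).1.2 a) _ fun b hb => ?_
    refine hsupp _ _ _ ⟨h1, ?_⟩ ?_
    · simpa using h2
    · simpa using hb
  have sν : ∀ N : ℕ+, ∑ b ∈ Finset.range ((N : ℕ) + 1), ν N b = 1 :=
    fun N => sum_range_of_hasSum (hν N).2 _ (hνN N)
  have hC : ∀ (N : ℕ+) (b : ℕ),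
      Ccoef K (N : ℕ) b = coefC (K (N + 1) ((N : ℕ) + 1)) ((N : ℕ) + 1) b := by
    intro N b
    have e : (N : ℕ).succPNat = N + 1 := by
      apply PNat.eq; simp
    simp only [Ccoef, coefC, e, N.ne_zero, if_false]
  have hcomp : Compatible ν K := by
    intro N a ha
    rw [hC]
    have := proj_init (hM (N + 1)) (hν (N + 1)).1 (hKm (N + 1)).1.1 N (by
      have := sν (N + 1)
      simpa using this) (sK N) (Y N) (hM N).1 (hproj N) a ha
    rw [← this]
    exact (congrFun (hνeq' N) a).symm
  have hvis : ∀ (N : ℕ+) (a : ℕ), 1 ≤ a → a ≤ (N : ℕ) → (Vis P (Y N) a ↔ Vis P (Y (N + 1)) a) := by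
    intro N a h1 h2
    have : ({ω | ∃ j, Y N j ω = a} : Set Ω) =ᵐ[P] {ω | ∃ j, Y (N + 1) j ω = a} := by
      rw [Filter.eventuallyEq_set]
      filter_upwards [hproj N] with ω hω
      constructor
      · rintro ⟨j, hj⟩
        rw [hω] at hj
        obtain ⟨n, h3, -⟩ := exists_of_proj (fun i => Y (N + 1) i ω) N j (by omega)
        exact ⟨n, h3.trans hj⟩
      · rintro ⟨n, hn⟩
        refine ⟨Nat.count (fun i => Y (N + 1) i ω ≤ N) n, ?_⟩
        rw [hω, proj_of_count _ _ _ n (by omega) rfl, hn]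
    unfold Vis
    rw [measure_congr this]
  have hprojK : ∀ N : ℕ+, projK N (K (N + 1)) = K N := by
    intro N
    funext a b
    by_cases ha : 1 ≤ a ∧ a ≤ (N : ℕ)
    swap
    · rw [row_delta (hKm N) a b ha]
      simp only [projK, if_neg ha]
    by_cases hb : b ≤ (N : ℕ)
    swap
    · rw [hsupp N a b ha (by omega)]
      simp only [projK, if_pos ha, if_neg hb]
    have e : projK N (K (N + 1)) a b = K (N + 1) a b
        + K (N + 1) a ((N : ℕ) + 1) * coefC (K (N + 1) ((N : ℕ) + 1)) ((N : ℕ) + 1) b := by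
      simp only [projK, if_pos ha, if_pos hb, coefC]
      split_ifs with h1 h2
      · rw [mul_div_assoc]
      · rw [h2, mul_one]
      · rw [mul_zero, add_zero]
    rw [e]
    by_cases hv : Vis P (Y N) a
    · obtain ⟨j, hj⟩ := hv.exists
      have h1 := vis_row (hM N) (hν N).1 (hKm N).1.1 j a b
      have h2 := proj_step (hM (N + 1)) (hν (N + 1)).1 (hKm (N + 1)).1.1 N (sK N) (Y N) (hM N).1
        (hproj N) j a b ha.1 ha.2 hb
      have h3 : P.real {ω | Y N j ω = a} ≠ 0 := by
        rw [measureReal_def]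
        exact (ENNReal.toReal_pos hj (measure_ne_top _ _)).ne'
      exact mul_left_cancel₀ h3 (h2.symm.trans h1)
    · have hv' : ¬ Vis P (Y (N + 1)) a := fun h => hv ((hvis N a ha.1 ha.2).mpr h)
      have ha' : 1 ≤ a ∧ a ≤ ((N + 1 : ℕ+) : ℕ) := ⟨ha.1, by
        rw [PNat.add_coe]; omega⟩
      have r1 : ∀ c, K (N + 1) a c = if c = 0 then 1 else 0 := by
        intro c
        simp only [K, modK]
        rw [if_pos ⟨ha', hv'⟩]
      have r2 : K N a b = if b = 0 then 1 else 0 := by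
        simp only [K, modK]
        rw [if_pos ⟨ha, hv⟩]
      rw [r1, r1, r2]
      simp
  refine ⟨⟨fun N a => (hν N).1 a, sν, hνN, fun N a ha => ?_⟩, K, ⟨hKm, hprojK⟩, hM, hcomp⟩
  change ν (N + 1) a ≤ ν N a
  have := hcomp N a ha
  rw [this, hC]
  have := mul_nonneg ((hν (N + 1)).1 ((N : ℕ) + 1))
    (coefC_nonneg ((hKm (N + 1)).1.1 ((N : ℕ) + 1)) ((N : ℕ) + 1) a)
  linarith
end
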